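/- There exists an absolute constant C such that for every odd prime p and every A ⊆ F_p with |A| ≥ 2, one has N'(A) − |A|⁶/p ≤ C·|A|^{5/2}·(E⁺(A))^{1/2}·(E×(A))^{1/4}·log|A|, where N'(A) is the number of sextuples (a1,a2,a3,a1',a2',a3') ∈ A⁶ with a1·a2 + a3 = a1'·a2' + a3'. -/

import Mathlib

open Finset

/-- The additive energy: quadruples `(a₁,a₂,a₃,a₄) ∈ A⁴` with `a₁+a₂ = a₃+a₄`. -/
def addEnergy (p : ℕ) (A : Finset (ZMod p)) : ℕ :=
  (((A ×ˢ A) ×ˢ A ×ˢ A).filter fun x => x.1.1 + x.1.2 = x.2.1 + x.2.2).card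

/-- The multiplicative energy: quadruples `(a₁,a₂,a₃,a₄) ∈ A⁴` with `a₁·a₂ = a₃·a₄`. -/
def mulEnergy (p : ℕ) (A : Finset (ZMod p)) : ℕ :=
  (((A ×ˢ A) ×ˢ A ×ˢ A).filter fun x => x.1.1 * x.1.2 = x.2.1 * x.2.2).card

/-- `Nprime p A` is the number of sextuples `(a₁,a₂,a₃,a₁',a₂',a₃') ∈ A⁶`
with `a₁a₂ + a₃ = a₁'a₂' + a₃'`. -/
def Nprime (p : ℕ) (A : Finset (ZMod p)) : ℕ :=
  (((A ×ˢ A ×ˢ A) ×ˢ (A ×ˢ A ×ˢ A)).filter fun x =>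
    x.1.1 * x.1.2.1 + x.1.2.2 = x.2.1 * x.2.2.1 + x.2.2.2).card


namespace Rud
open MvPolynomial

noncomputable def evM {K : Type*} [Field K] (m : K × K × K) :
    MvPolynomial (Fin 3) K →ₐ[K] Polynomial K :=
  aeval ![Polynomial.C m.2.1 * Polynomial.X + Polynomial.C m.2.2, Polynomial.X, Polynomial.C m.1]

noncomputable def evL {K : Type*} [Field K] (l : K × K × K) :
    MvPolynomial (Fin 3) K →ₐ[K] Polynomial K :=
  aeval ![Polynomial.C l.2.1 * Polynomial.X + Polynomial.C l.2.2, Polynomial.C l.1, Polynomial.X]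

def Inc {K : Type*} [Field K] (l m : K × K × K) : Prop :=
  l.2.1 * m.1 + l.2.2 = m.2.1 * l.1 + m.2.2

variable {K : Type*} [Field K]

lemma natDegree_lin (a b : K) :
    (Polynomial.C a * Polynomial.X + Polynomial.C b).natDegree ≤ 1 :=
  Polynomial.natDegree_linear_le

lemma evM_natDegree (m : K × K × K) (f : MvPolynomial (Fin 3) K) :
    (evM m f).natDegree ≤ f.totalDegree := by
  have := aeval_natDegree_le (n := 1) f le_rfl
    ![Polynomial.C m.2.1 * Polynomial.X + Polynomial.C m.2.2, Polynomial.X, Polynomial.C m.1]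
    (by intro i; fin_cases i <;> first | exact natDegree_lin _ _ | simp)
  simpa [evM] using this

lemma evL_natDegree (l : K × K × K) (f : MvPolynomial (Fin 3) K) :
    (evL l f).natDegree ≤ f.totalDegree := by
  have := aeval_natDegree_le (n := 1) f le_rfl
    ![Polynomial.C l.2.1 * Polynomial.X + Polynomial.C l.2.2, Polynomial.C l.1, Polynomial.X]
    (by intro i; fin_cases i <;> first | exact natDegree_lin _ _ | simp)
  simpa [evL] using this

lemma eval_evM (m : K × K × K) (f : MvPolynomial (Fin 3) K) (x : K) :
    (evM m f).eval x = eval ![m.2.1 * x + m.2.2, x, m.1] f := by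
  have : (Polynomial.evalRingHom x).comp (evM m).toRingHom
      = (eval ![m.2.1 * x + m.2.2, x, m.1] : MvPolynomial (Fin 3) K →+* K) := by
    apply MvPolynomial.ringHom_ext
    · intro r; simp [evM]
    · intro i; fin_cases i <;> simp [evM]
  simpa using congrArg (fun h => h f) this

lemma eval_evL (l : K × K × K) (f : MvPolynomial (Fin 3) K) (y : K) :
    (evL l f).eval y = eval ![l.2.1 * y + l.2.2, l.1, y] f := by
  have : (Polynomial.evalRingHom y).comp (evL l).toRingHom
      = (eval ![l.2.1 * y + l.2.2, l.1, y] : MvPolynomial (Fin 3) K →+* K) := by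
    apply MvPolynomial.ringHom_ext
    · intro r; simp [evL]
    · intro i; fin_cases i <;> simp [evL]
  simpa using congrArg (fun h => h f) this

lemma hits_le (m : K × K × K) (g : MvPolynomial (Fin 3) K) (hg : evM m g ≠ 0)
    (S : Finset (K × K × K)) (hS : Set.InjOn Prod.fst (S : Set (K × K × K)))
    (h : ∀ l ∈ S, evL l g = 0 ∧ Inc l m) : S.card ≤ g.totalDegree := by
  classical
  have h1 : (S.image Prod.fst).val ⊆ (evM m g).roots := by
    intro x hx
    simp only [Finset.mem_val, Finset.mem_image] at hx
    obtain ⟨l, hl, rfl⟩ := hx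
    rw [Polynomial.mem_roots hg, Polynomial.IsRoot, eval_evM]
    obtain ⟨h2, h3⟩ := h l hl
    rw [← h3, ← eval_evL l g m.1, h2]; simp
  have h2 := Polynomial.card_le_degree_of_subset_roots h1
  rw [Finset.card_image_of_injOn hS] at h2
  exact h2.trans (evM_natDegree m g)

/-- two-variable evaluation at `y = b`. -/
noncomputable def ev2 (b : K) : MvPolynomial (Fin 2) K →ₐ[K] Polynomial K :=
  aeval ![Polynomial.X, Polynomial.C b]

noncomputable def toBi : MvPolynomial (Fin 2) K →+* Polynomial (Polynomial K) :=
  eval₂Hom (Polynomial.C.comp Polynomial.C) ![Polynomial.C Polynomial.X, Polynomial.X]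

noncomputable def ofBi : Polynomial (Polynomial K) →+* MvPolynomial (Fin 2) K :=
  Polynomial.eval₂RingHom (Polynomial.eval₂RingHom MvPolynomial.C (X 0)) (X 1)

lemma ofBi_toBi (f : MvPolynomial (Fin 2) K) : ofBi (toBi f) = f := by
  have : (ofBi (K := K)).comp toBi = RingHom.id _ := by
    apply MvPolynomial.ringHom_ext
    · intro r; simp [ofBi, toBi]
    · intro i; fin_cases i <;> simp [ofBi, toBi]
  simpa using congrArg (fun h => h f) this

lemma toBi_natDegree (f : MvPolynomial (Fin 2) K) : (toBi f).natDegree ≤ f.totalDegree := by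
  have := aeval_natDegree_le (n := 1) (map (Polynomial.C : K →+* Polynomial K) f) le_rfl
    (![Polynomial.C Polynomial.X, Polynomial.X] : Fin 2 → Polynomial (Polynomial K))
    (by intro i; fin_cases i <;> simp)
  have h2 : toBi f = aeval (![Polynomial.C Polynomial.X, Polynomial.X] : Fin 2 → Polynomial (Polynomial K))
      (map (Polynomial.C : K →+* Polynomial K) f) := by
    rw [aeval_def, eval₂_map]; rfl
  rw [h2]
  refine this.trans ?_
  rw [mul_one]
  exact Finset.sup_mono (support_map_subset Polynomial.C f)

lemma toBi_eval (f : MvPolynomial (Fin 2) K) (b : K) :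
    (toBi f).eval (Polynomial.C b) = ev2 b f := by
  have : (Polynomial.evalRingHom (Polynomial.C b)).comp (toBi (K := K))
      = (ev2 b).toRingHom := by
    apply MvPolynomial.ringHom_ext
    · intro r; simp [ev2, toBi]
    · intro i; fin_cases i <;> simp [ev2, toBi]
  simpa using congrArg (fun h => h f) this

lemma card_ev2 (R : MvPolynomial (Fin 2) K) (hR : R ≠ 0) (Y : Finset K)
    (h : ∀ b ∈ Y, ev2 b R = 0) : Y.card ≤ R.totalDegree := by
  classical
  have h0 : toBi R ≠ 0 := fun h => hR (by rw [← ofBi_toBi R, h, map_zero])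
  have h1 : (Y.image Polynomial.C).val ⊆ (toBi R).roots := by
    intro x hx
    simp only [Finset.mem_val, Finset.mem_image] at hx
    obtain ⟨b, hb, rfl⟩ := hx
    rw [Polynomial.mem_roots h0, Polynomial.IsRoot, toBi_eval, h b hb]
  have h2 := Polynomial.card_le_degree_of_subset_roots h1
  rw [Finset.card_image_of_injective _ Polynomial.C_injective] at h2
  exact h2.trans (toBi_natDegree R)

lemma evM_finSucc (m : K × K × K) (f : MvPolynomial (Fin 3) K) :
    evM m f = (finSuccEquiv K 2 f).eval₂ (ev2 m.1 : MvPolynomial (Fin 2) K →+* Polynomial K)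
      (Polynomial.C m.2.1 * Polynomial.X + Polynomial.C m.2.2) := by
  have : (evM m).toRingHom = (Polynomial.eval₂RingHom (ev2 m.1 : MvPolynomial (Fin 2) K →+* Polynomial K)
      (Polynomial.C m.2.1 * Polynomial.X + Polynomial.C m.2.2)).comp
      (finSuccEquiv K 2 : _ →+* _) := by
    apply MvPolynomial.ringHom_ext
    · intro r; simp [evM, ev2, finSuccEquiv_apply]
    · intro i
      fin_cases i
      · simp [evM, finSuccEquiv_X_zero]
      · have := finSuccEquiv_X_succ (R := K) (n := 2) (j := 0)
        simp at this
        simp [evM, ev2, this]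
      · have := finSuccEquiv_X_succ (R := K) (n := 2) (j := 1)
        simp at this
        simp [evM, ev2, this]
  simpa using congrArg (fun h => h f) this

lemma coeff_deg (f : MvPolynomial (Fin 3) K) (i : ℕ) :
    ((finSuccEquiv K 2 f).coeff i).totalDegree ≤ f.totalDegree := by
  by_cases h : (finSuccEquiv K 2 f).coeff i = 0
  · simp [h]
  · have := totalDegree_coeff_finSuccEquiv_add_le f i h; omega

lemma det_deg {n : ℕ} (D : Fin n → ℕ) (A : Matrix (Fin n) (Fin n) (MvPolynomial (Fin 2) K))
    (h : ∀ i j, (A i j).totalDegree ≤ D j) : A.det.totalDegree ≤ ∑ j, D j := by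
  rw [Matrix.det_apply]
  refine totalDegree_finsetSum_le (fun σ _ => ?_)
  have : (Equiv.Perm.sign σ • ∏ i, A (σ i) i).totalDegree ≤ (∏ i, A (σ i) i).totalDegree := by
    rcases Int.units_eq_one_or (Equiv.Perm.sign σ) with h | h <;> simp [h]
  refine this.trans ((totalDegree_finsetProd _ _).trans ?_)
  exact Finset.sum_le_sum (fun i _ => h (σ i) i)

lemma res_deg (f g : MvPolynomial (Fin 3) K) :
    ((finSuccEquiv K 2 f).resultant (finSuccEquiv K 2 g)).totalDegree
      ≤ 2 * f.totalDegree * g.totalDegree := by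
  have h1 : (finSuccEquiv K 2 f).natDegree ≤ f.totalDegree := by
    rw [natDegree_finSuccEquiv]; exact degreeOf_le_totalDegree _ _
  have h2 : (finSuccEquiv K 2 g).natDegree ≤ g.totalDegree := by
    rw [natDegree_finSuccEquiv]; exact degreeOf_le_totalDegree _ _
  have := det_deg (Fin.addCases (fun _ => g.totalDegree) (fun _ => f.totalDegree))
    ((finSuccEquiv K 2 f).sylvester (finSuccEquiv K 2 g) (finSuccEquiv K 2 f).natDegree
      (finSuccEquiv K 2 g).natDegree) (by
      intro i j
      simp only [Polynomial.sylvester, Matrix.of_apply]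
      refine Fin.addCases (fun j => ?_) (fun j => ?_) j
      · simp only [Fin.addCases_left]
        split_ifs
        · exact coeff_deg g (i - j)
        · simp
      · simp only [Fin.addCases_right]
        split_ifs
        · exact coeff_deg f (i - j)
        · simp)
  refine this.trans ?_
  rw [Fin.sum_univ_add]
  simp only [Fin.addCases_left, Fin.addCases_right, Finset.sum_const, Finset.card_univ,
    Fintype.card_fin, smul_eq_mul]
  nlinarith [Nat.mul_le_mul_right g.totalDegree h1, Nat.mul_le_mul_right f.totalDegree h2]

lemma res_ne_zero {R : Type*} [CommRing R] [IsDomain R] (f g : Polynomial R) (hf : Prime f)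
    (hg : ¬ f ∣ g) : f.resultant g ≠ 0 := by
  intro h0
  let b₁ := ((Polynomial.degreeLT.basis R f.natDegree).prod
    (Polynomial.degreeLT.basis R g.natDegree)).reindex finSumFinEquiv
  let b₂ := Polynomial.degreeLT.basis R (f.natDegree + g.natDegree)
  obtain ⟨v, hv, hv2⟩ := Matrix.exists_mulVec_eq_zero_iff.mpr h0
  rw [← Polynomial.toMatrix_sylvesterMap' f g le_rfl le_rfl] at hv2
  let w := b₁.equivFun.symm v
  have hw : w ≠ 0 := (LinearEquiv.map_ne_zero_iff _).mpr hv
  have hw2 : Polynomial.sylvesterMap f g le_rfl le_rfl w = 0 := by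
    have h3 := LinearMap.toMatrix_mulVec_repr b₁ b₂ (Polynomial.sylvesterMap f g le_rfl le_rfl) w
    have h4 : (b₁.repr w : _ → R) = v := by
      exact b₁.equivFun.apply_symm_apply v
    rw [h4] at h3
    erw [hv2] at h3
    apply b₂.repr.injective
    ext i
    simpa using (congrFun h3 i).symm
  have hw3 : f * (w.2 : Polynomial R) + g * (w.1 : Polynomial R) = 0 := by
    have := congrArg Subtype.val hw2
    simpa using this
  have h5 : f ∣ g * (w.1 : Polynomial R) := ⟨-(w.2 : Polynomial R), by linear_combination hw3⟩
  have h6 : f ∣ (w.1 : Polynomial R) := (hf.dvd_or_dvd h5).resolve_left hg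
  have h7 : (w.1 : Polynomial R) = 0 := by
    apply Polynomial.eq_zero_of_dvd_of_degree_lt h6
    have := Polynomial.mem_degreeLT.mp w.1.2
    rwa [Polynomial.degree_eq_natDegree hf.ne_zero]
  have h8 : (w.2 : Polynomial R) = 0 := by
    rw [h7] at hw3; simpa [hf.ne_zero] using hw3
  exact hw (Prod.ext (Subtype.ext h7) (Subtype.ext h8))

/-- Bezout for lines of type M. -/
lemma bezout (f g : MvPolynomial (Fin 3) K) (hf : Prime f) (hg : ¬ f ∣ g)
    (Y : Finset (K × K × K)) (hY : Set.InjOn Prod.fst (Y : Set (K × K × K)))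
    (h : ∀ m ∈ Y, evM m f = 0 ∧ evM m g = 0) :
    Y.card ≤ 2 * f.totalDegree * g.totalDegree := by
  classical
  set F := finSuccEquiv K 2 f with hF
  set G := finSuccEquiv K 2 g with hG
  have hF1 : Prime F := (MulEquiv.prime_iff (finSuccEquiv K 2).toMulEquiv).mpr hf
  have hG1 : ¬ F ∣ G := fun hh => hg ((map_dvd_iff (finSuccEquiv K 2)).mp hh)
  have hR := res_ne_zero F G hF1 hG1
  by_cases hdeg : F.natDegree = 0
  · -- no z in f
    obtain ⟨c, hc⟩ := Polynomial.natDegree_eq_zero.mp hdeg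
    have hc0 : c ≠ 0 := by rintro rfl; exact hF1.ne_zero (by simpa using hc.symm)
    have h1 := card_ev2 c hc0 (Y.image Prod.fst) (by
      intro b hb
      obtain ⟨m, hm, rfl⟩ := Finset.mem_image.mp hb
      have := (h m hm).1
      rw [evM_finSucc, ← hF, ← hc] at this
      simpa using this)
    rw [Finset.card_image_of_injOn hY] at h1
    have h2 := coeff_deg f 0
    rw [← hF, ← hc] at h2
    simp only [Polynomial.coeff_C_zero] at h2
    rcases Nat.eq_zero_or_pos g.totalDegree with h3 | h3
    · rw [totalDegree_eq_zero_iff_eq_C] at h3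
      have : Y = ∅ := by
        by_contra hne
        obtain ⟨m, hm⟩ := Finset.nonempty_iff_ne_empty.mpr hne
        have h4 := (h m hm).2
        rw [h3] at h4
        have h5 : coeff 0 g = 0 := by simpa [evM] using h4
        rw [h5] at h3
        exact hg (by rw [h3]; simp)
      simp [this]
    · nlinarith [Nat.zero_le f.totalDegree, Nat.zero_le g.totalDegree]
  · obtain ⟨u, v, -, -, huv⟩ := Polynomial.exists_mul_add_mul_eq_C_resultant F G le_rfl le_rfl
      (Or.inl hdeg)
    have h1 := card_ev2 _ hR (Y.image Prod.fst) (by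
      intro b hb
      obtain ⟨m, hm, rfl⟩ := Finset.mem_image.mp hb
      obtain ⟨e1, e2⟩ := h m hm
      rw [evM_finSucc, ← hF] at e1
      rw [evM_finSucc, ← hG] at e2
      have := congrArg (Polynomial.eval₂ (ev2 m.1 : MvPolynomial (Fin 2) K →+* Polynomial K)
        (Polynomial.C m.2.1 * Polynomial.X + Polynomial.C m.2.2)) huv
      rw [Polynomial.eval₂_add, Polynomial.eval₂_mul, Polynomial.eval₂_mul, e1, e2,
        Polynomial.eval₂_C] at this
      simpa using this.symm)
    rw [Finset.card_image_of_injOn hY] at h1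
    exact h1.trans (res_deg f g)

end Rud

namespace Rud
open MvPolynomial
variable {K : Type*} [Field K]

lemma pderiv_deg (i : Fin 3) (f : MvPolynomial (Fin 3) K) (h : pderiv i f ≠ 0) :
    (pderiv i f).totalDegree + 1 ≤ f.totalDegree := by
  obtain ⟨m, hm, hm2⟩ : ∃ m ∈ (pderiv i f).support, (pderiv i f).totalDegree = m.sum fun _ e => e := by
    unfold totalDegree
    exact Finset.exists_mem_eq_sup _ (support_nonempty.mpr h) _
  rw [hm2]
  rw [mem_support_iff, coeff_pderiv] at hm
  have h2 : m + Finsupp.single i 1 ∈ f.support := by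
    rw [mem_support_iff]; intro h0; rw [h0] at hm; simp at hm
  have := le_totalDegree h2
  rwa [Finsupp.sum_add_index' (by simp) (by simp), Finsupp.sum_single_index rfl] at this

lemma pderiv_deg' (i : Fin 3) (f : MvPolynomial (Fin 3) K) :
    (pderiv i f).totalDegree ≤ f.totalDegree := by
  by_cases h : pderiv i f = 0
  · simp [h]
  · have := pderiv_deg i f h; omega

lemma not_dvd_deg {f g : MvPolynomial (Fin 3) K} (hg : g ≠ 0)
    (h : g.totalDegree < f.totalDegree) : ¬ f ∣ g := by
  rintro ⟨c, rfl⟩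
  have hf : f ≠ 0 := left_ne_zero_of_mul hg
  have hc : c ≠ 0 := right_ne_zero_of_mul hg
  rw [totalDegree_mul_of_isDomain hf hc] at h
  omega

lemma not_dvd_pderiv {f : MvPolynomial (Fin 3) K} (i : Fin 3) (h : pderiv i f ≠ 0) :
    ¬ f ∣ pderiv i f := not_dvd_deg h (by have := pderiv_deg i f h; omega)

noncomputable def TT (f : MvPolynomial (Fin 3) K) :
    Derivation K (MvPolynomial (Fin 3) K) (MvPolynomial (Fin 3) K) :=
  pderiv 0 f • pderiv 1 + (-pderiv 1 f) • pderiv 0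

lemma TT_apply (f g : MvPolynomial (Fin 3) K) :
    TT f g = pderiv 0 f * pderiv 1 g + (-pderiv 1 f) * pderiv 0 g := by
  simp [TT]

lemma TT_self (f : MvPolynomial (Fin 3) K) : TT f f = 0 := by
  rw [TT_apply]; ring

noncomputable def Phi (f : MvPolynomial (Fin 3) K) : MvPolynomial (Fin 3) K :=
  (-pderiv 1 f) * TT f (pderiv 0 f) - pderiv 0 f * TT f (-pderiv 1 f)

lemma TT_deg (f g : MvPolynomial (Fin 3) K) :
    (TT f g).totalDegree ≤ f.totalDegree + g.totalDegree := by
  rw [TT_apply]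
  refine (totalDegree_add _ _).trans (max_le ?_ ?_)
  · refine (totalDegree_mul _ _).trans (add_le_add (pderiv_deg' _ _) (pderiv_deg' _ _))
  · refine (totalDegree_mul _ _).trans (add_le_add ?_ (pderiv_deg' _ _))
    rw [totalDegree_neg]; exact pderiv_deg' _ _

lemma Phi_deg (f : MvPolynomial (Fin 3) K) :
    (Phi f).totalDegree ≤ 3 * f.totalDegree := by
  unfold Phi
  refine (totalDegree_sub _ _).trans (max_le ?_ ?_)
  · refine (totalDegree_mul _ _).trans ?_
    have h1 := TT_deg f (pderiv 0 f)
    have h2 := pderiv_deg' 0 f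
    have h3 := pderiv_deg' 1 f
    rw [totalDegree_neg]; omega
  · refine (totalDegree_mul _ _).trans ?_
    have h1 := TT_deg f (-pderiv 1 f)
    rw [totalDegree_neg] at h1
    have h2 := pderiv_deg' 0 f
    have h3 := pderiv_deg' 1 f
    omega

lemma deriv_evM (m : K × K × K) (g : MvPolynomial (Fin 3) K) :
    Polynomial.derivative (evM m g) =
      evM m (pderiv 1 g) + Polynomial.C m.2.1 * evM m (pderiv 0 g) := by
  induction g using MvPolynomial.induction_on with
  | C r => simp [evM]
  | add p q hp hq => simp only [map_add, hp, hq]; ring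
  | mul_X p i hp =>
    simp only [map_mul, Polynomial.derivative_mul, hp, pderiv_mul, map_add]
    fin_cases i
    · simp [evM, pderiv_X]; ring
    · simp [evM, pderiv_X]; ring
    · simp [evM, pderiv_X]; ring

lemma evM_Phi (m : K × K × K) (f : MvPolynomial (Fin 3) K) (h : evM m f = 0) :
    evM m (Phi f) = 0 := by
  have h1 := deriv_evM m f
  rw [h, Polynomial.derivative_zero] at h1
  have h0 := deriv_evM m (pderiv 0 f)
  have h2 := deriv_evM m (pderiv 1 f)
  have h3 : evM m (pderiv 1 f) = - (Polynomial.C m.2.1 * evM m (pderiv 0 f)) := by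
    linear_combination -h1
  have h4 : Polynomial.derivative (evM m (pderiv 1 f)) =
      - (Polynomial.C m.2.1 * Polynomial.derivative (evM m (pderiv 0 f))) := by
    rw [h3]; simp
  simp only [Phi, TT_apply, map_sub, map_mul, map_add, map_neg, h3]
  rw [h4, h0] at h2
  linear_combination (-(evM m (pderiv 0 f)) ^ 2) * h2

noncomputable def tau (f : MvPolynomial (Fin 3) K) :
    MvPolynomial (Fin 3) K →ₐ[K] Polynomial (MvPolynomial (Fin 3) K) :=
  aeval ![Polynomial.C (X 0) + Polynomial.X * Polynomial.C (-pderiv 1 f),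
    Polynomial.C (X 1) + Polynomial.X * Polynomial.C (pderiv 0 f), Polynomial.C (X 2)]

noncomputable def DD (f : MvPolynomial (Fin 3) K) :
    Derivation K (Polynomial (MvPolynomial (Fin 3) K)) (Polynomial (MvPolynomial (Fin 3) K)) :=
  PolynomialModule.equivPolynomialSelf.compDer (TT f).mapCoeffs

lemma DD_coeff (f : MvPolynomial (Fin 3) K) (P) (i : ℕ) :
    (DD f P).coeff i = TT f (P.coeff i) := rfl

lemma DD_C (f g : MvPolynomial (Fin 3) K) : DD f (Polynomial.C g) = Polynomial.C (TT f g) := by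
  ext1 i
  rw [DD_coeff, Polynomial.coeff_C, Polynomial.coeff_C]
  split_ifs <;> simp

lemma DD_X (f : MvPolynomial (Fin 3) K) : DD f Polynomial.X = 0 := by
  ext1 i
  rw [DD_coeff, Polynomial.coeff_X]
  split_ifs <;> simp

lemma tau_key (f g : MvPolynomial (Fin 3) K) (hf : f ∣ Phi f) :
    Polynomial.C f ∣ Polynomial.C (pderiv 0 f) * DD f (tau f g) -
      (Polynomial.C (pderiv 0 f) + Polynomial.X * Polynomial.C (TT f (pderiv 0 f))) *
        Polynomial.derivative (tau f g) := by
  induction g using MvPolynomial.induction_on with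
  | C r =>
    have : tau f (C r) = Polynomial.C (C r) := by simp [tau]
    rw [this, DD_C]
    have : TT f (C r) = 0 := by simp [TT_apply]
    rw [this]; simp
  | add p q hp hq =>
    have := dvd_add hp hq
    simp only [map_add]
    convert this using 1; ring
  | mul_X p i hp =>
    have h1 : Polynomial.C f ∣ Polynomial.C (pderiv 0 f) * DD f (tau f (X i)) -
      (Polynomial.C (pderiv 0 f) + Polynomial.X * Polynomial.C (TT f (pderiv 0 f))) *
        Polynomial.derivative (tau f (X i)) := by
      have e0 : TT f (X 0) = -pderiv 1 f := by simp [TT_apply, pderiv_X]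
      have e1 : TT f (X 1) = pderiv 0 f := by simp [TT_apply, pderiv_X]
      have e2 : TT f (X 2) = 0 := by simp [TT_apply, pderiv_X]
      fin_cases i
      · have e : tau f (X 0) = Polynomial.C (X 0) + Polynomial.X * Polynomial.C (-pderiv 1 f) := by
          simp [tau]
        simp only [Fin.zero_eta]
        rw [e, map_add, Derivation.leibniz, DD_C, DD_C, DD_X, e0]
        obtain ⟨c, hc⟩ := hf
        refine ⟨- Polynomial.X * Polynomial.C c, ?_⟩
        have := congrArg (Polynomial.C (R := MvPolynomial (Fin 3) K)) hc
        rw [Phi] at this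
        simp only [map_mul, map_sub, map_neg] at this ⊢
        simp only [Polynomial.derivative_add, Polynomial.derivative_C, Polynomial.derivative_mul,
          Polynomial.derivative_X, smul_eq_mul, Polynomial.derivative_neg]
        linear_combination (- Polynomial.X) * this
      · have e : tau f (X 1) = Polynomial.C (X 1) + Polynomial.X * Polynomial.C (pderiv 0 f) := by
          simp [tau]
        simp only [Fin.mk_one]
        rw [e, map_add, Derivation.leibniz, DD_C, DD_C, DD_X, e1]
        refine ⟨0, ?_⟩
        simp only [Polynomial.derivative_add, Polynomial.derivative_C, Polynomial.derivative_mul,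
          Polynomial.derivative_X, smul_eq_mul]
        ring
      · have e : tau f (X 2) = Polynomial.C (X 2) := by
          simp [tau]
        simp only [Fin.reduceFinMk]
        rw [e, DD_C, e2]; simp
    have := dvd_add (Dvd.dvd.mul_left h1 (tau f p)) (Dvd.dvd.mul_left hp (tau f (X i)))
    convert this using 1
    rw [map_mul, Derivation.leibniz, Polynomial.derivative_mul]
    simp only [smul_eq_mul]; ring

lemma tau_natDegree (f g : MvPolynomial (Fin 3) K) : (tau f g).natDegree ≤ g.totalDegree := by
  have := aeval_natDegree_le (n := 1) (map (C : K →+* MvPolynomial (Fin 3) K) g) le_rfl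
    (![Polynomial.C (X 0) + Polynomial.X * Polynomial.C (-pderiv 1 f),
    Polynomial.C (X 1) + Polynomial.X * Polynomial.C (pderiv 0 f), Polynomial.C (X 2)] :
      Fin 3 → Polynomial (MvPolynomial (Fin 3) K))
    (by
      have key : ∀ a b : MvPolynomial (Fin 3) K,
        (Polynomial.C a + Polynomial.X * Polynomial.C b).natDegree ≤ 1 := by
        intro a b; rw [add_comm, mul_comm]; exact Polynomial.natDegree_linear_le
      intro i; fin_cases i
      · exact key _ _
      · exact key _ _
      · simp)
  have h2 : tau f g = aeval (![Polynomial.C (X 0) + Polynomial.X * Polynomial.C (-pderiv 1 f),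
    Polynomial.C (X 1) + Polynomial.X * Polynomial.C (pderiv 0 f), Polynomial.C (X 2)] :
      Fin 3 → Polynomial (MvPolynomial (Fin 3) K))
      (map (C : K →+* MvPolynomial (Fin 3) K) g) := by
    rw [aeval_def, eval₂_map]; rfl
  rw [h2]
  refine this.trans ?_
  rw [mul_one]
  exact Finset.sup_mono (support_map_subset C g)

lemma tau_zero (f g : MvPolynomial (Fin 3) K) : (tau f g).coeff 0 = g := by
  have : (Polynomial.constantCoeff).comp (tau f).toRingHom = RingHom.id _ := by
    apply MvPolynomial.ringHom_ext
    · intro r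
      have : tau f (C r) = Polynomial.C (C r) := by simp [tau]
      simp [this]
    · intro i; fin_cases i <;> simp [tau]
  simpa using congrArg (fun h => h g) this

lemma star (p : ℕ) [CharP K p] (f : MvPolynomial (Fin 3) K) (hf : Prime f)
    (hp : f.totalDegree < p) (ha : pderiv 0 f ≠ 0) (hPhi : f ∣ Phi f) (j : ℕ) :
    f ∣ (tau f f).coeff j := by
  have hp1 : p.Prime := by
    rcases CharP.char_is_prime_or_zero K p with h | h
    · exact h
    · omega
  induction j with
  | zero => rw [tau_zero]
  | succ j ih =>
    by_cases hj : f.totalDegree < j + 1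
    · rw [Polynomial.coeff_eq_zero_of_natDegree_lt ((tau_natDegree f f).trans_lt hj)]; simp
    have h1 := (Polynomial.C_dvd_iff_dvd_coeff _ _).mp (tau_key f f hPhi) j
    have h2 : f ∣ TT f ((tau f f).coeff j) := by
      obtain ⟨c, hc⟩ := ih
      rw [hc, Derivation.leibniz, TT_self]; simp
    have h3 : ((Polynomial.C (pderiv 0 f) + Polynomial.X * Polynomial.C (TT f (pderiv 0 f))) *
        Polynomial.derivative (tau f f)).coeff j = pderiv 0 f * ((tau f f).coeff (j+1) * (j+1)) +
          TT f (pderiv 0 f) * ((tau f f).coeff j * j) := by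
      rw [add_mul, Polynomial.coeff_add, Polynomial.coeff_C_mul, Polynomial.coeff_derivative,
        mul_assoc]
      congr 1
      cases j with
      | zero => simp
      | succ j =>
        rw [Polynomial.coeff_X_mul, Polynomial.coeff_C_mul, Polynomial.coeff_derivative]
        push_cast; rfl
    rw [Polynomial.coeff_sub, Polynomial.coeff_C_mul, DD_coeff, h3] at h1
    have h4 : f ∣ pderiv 0 f * ((tau f f).coeff (j+1) * (j+1)) := by
      have := dvd_sub (Dvd.dvd.mul_left h2 (pderiv 0 f)) (dvd_add h1
        (Dvd.dvd.mul_left (Dvd.dvd.mul_right ih (j : MvPolynomial (Fin 3) K)) (TT f (pderiv 0 f))))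
      convert this using 1; ring
    have h5 := (hf.dvd_or_dvd h4).resolve_left (not_dvd_pderiv 0 ha)
    refine (hf.dvd_or_dvd h5).resolve_right ?_
    have hne : ((j + 1 : ℕ) : K) ≠ 0 := by
      rw [Ne, CharP.cast_eq_zero_iff K p]
      intro h; have := Nat.le_of_dvd (by omega) h; omega
    intro h
    have h6 : ((j : MvPolynomial (Fin 3) K) + 1) = C ((j + 1 : ℕ) : K) := by simp
    rw [h6] at h
    exact hf.not_isUnit (isUnit_of_dvd_unit h ((Ne.isUnit hne).map C))

end Rud

namespace Rud
open MvPolynomial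
open scoped Classical
variable {K : Type*} [Field K]

lemma degreeOf_eq_zero_iff' (i : Fin 3) (f : MvPolynomial (Fin 3) K) :
    degreeOf i f = 0 ↔ ∀ m ∈ f.support, m i = 0 := by
  rw [degreeOf_eq_sup, ← Nat.bot_eq_zero, Finset.sup_eq_bot_iff]

noncomputable def toBj : MvPolynomial (Fin 2) K →+* Polynomial (Polynomial K) :=
  eval₂Hom (Polynomial.C.comp Polynomial.C) ![Polynomial.X, Polynomial.C Polynomial.X]

noncomputable def ofBj : Polynomial (Polynomial K) →+* MvPolynomial (Fin 2) K :=
  Polynomial.eval₂RingHom (Polynomial.eval₂RingHom MvPolynomial.C (X 1)) (X 0)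

lemma ofBj_toBj (f : MvPolynomial (Fin 2) K) : ofBj (toBj f) = f := by
  have : (ofBj (K := K)).comp toBj = RingHom.id _ := by
    apply MvPolynomial.ringHom_ext
    · intro r; simp [ofBj, toBj]
    · intro i; fin_cases i <;> simp [ofBj, toBj]
  simpa using congrArg (fun h => h f) this

noncomputable def phi (f : MvPolynomial (Fin 3) K) (l : K × K × K) :
    MvPolynomial (Fin 3) K →+* Polynomial (Polynomial K) :=
  (Polynomial.mapRingHom (evL l : MvPolynomial (Fin 3) K →+* Polynomial K)).comp (tau f).toRingHom

lemma phi_C (f : MvPolynomial (Fin 3) K) (l : K × K × K) (r : K) :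
    phi f l (C r) = Polynomial.C (Polynomial.C r) := by
  simp [phi, tau]
lemma phi_X0 (f : MvPolynomial (Fin 3) K) (l : K × K × K) :
    phi f l (X 0) = Polynomial.C (Polynomial.C l.2.1 * Polynomial.X + Polynomial.C l.2.2) +
      Polynomial.X * Polynomial.C (-evL l (pderiv 1 f)) := by
  simp [phi, tau, evL]
lemma phi_X1 (f : MvPolynomial (Fin 3) K) (l : K × K × K) :
    phi f l (X 1) = Polynomial.C (Polynomial.C l.1) +
      Polynomial.X * Polynomial.C (evL l (pderiv 0 f)) := by
  simp [phi, tau, evL]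
  ring
lemma phi_X2 (f : MvPolynomial (Fin 3) K) (l : K × K × K) :
    phi f l (X 2) = Polynomial.C (Polynomial.X) := by
  simp [phi, tau, evL]

lemma phi_Y (f : MvPolynomial (Fin 3) K) (l : K × K × K) (A : Polynomial K) :
    phi f l (Polynomial.eval₂ C (X 2) A) = Polynomial.C A := by
  induction A using Polynomial.induction_on' with
  | add p q hp hq => simp only [Polynomial.eval₂_add, map_add, hp, hq]
  | monomial n a =>
    rw [Polynomial.eval₂_monomial, map_mul, map_pow, phi_C, phi_X2, ← Polynomial.C_mul_X_pow_eq_monomial]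
    simp

lemma phi_inj (f : MvPolynomial (Fin 3) K) (l : K × K × K) (hA : evL l (pderiv 0 f) ≠ 0)
    (r : MvPolynomial (Fin 2) K)
    (h : phi f l ((finSuccEquiv K 2).symm (Polynomial.C r)) = 0) : r = 0 := by
  have key : ((phi f l).comp ((finSuccEquiv K 2).symm : _ →+* _)).comp Polynomial.C =
      (Polynomial.compRingHom (Polynomial.C (Polynomial.C l.1) +
      Polynomial.X * Polynomial.C (evL l (pderiv 0 f)))).comp (toBj (K := K)) := by
    have hs : ∀ j : Fin 2, (finSuccEquiv K 2).symm (Polynomial.C (X j)) = X j.succ := by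
      intro j; rw [AlgEquiv.symm_apply_eq, finSuccEquiv_X_succ]
    have hc : ∀ r : K, (finSuccEquiv K 2).symm (Polynomial.C (C r)) = C r := by
      intro j; rw [AlgEquiv.symm_apply_eq]; simp [finSuccEquiv_apply]
    apply MvPolynomial.ringHom_ext
    · intro r
      simp only [RingHom.comp_apply, RingHom.coe_coe, hc]
      simp [toBj, phi_C]
    · intro i
      simp only [RingHom.comp_apply, RingHom.coe_coe, hs]
      fin_cases i
      · have : phi f l (X 1) = _ := phi_X1 f l
        simp only [Fin.zero_eta, Fin.succ_zero_eq_one, this]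
        simp [toBj]
      · have : phi f l (X 2) = _ := phi_X2 f l
        simp only [Fin.mk_one, Fin.succ_one_eq_two, this]
        simp [toBj]
  have h2 := congrArg (fun g => g r) key
  simp only [RingHom.comp_apply, RingHom.coe_coe, h] at h2
  have h3 : (toBj r).comp (Polynomial.C (Polynomial.C l.1) +
      Polynomial.X * Polynomial.C (evL l (pderiv 0 f))) = 0 := h2.symm
  have hr : toBj r = 0 := by
    rcases Polynomial.comp_eq_zero_iff.mp h3 with h | ⟨-, h⟩
    · exact h
    · exfalso
      have := congrArg (fun q => Polynomial.coeff q 1) h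
      simp [Polynomial.coeff_C] at this
      exact hA this
  rw [← ofBj_toBj r, hr, map_zero]

noncomputable def GG (f : MvPolynomial (Fin 3) K) (l : K × K × K) : MvPolynomial (Fin 3) K :=
  Polynomial.eval₂ C (X 2) (evL l (pderiv 0 f)) * (X 0 - C l.2.1 * X 2 - C l.2.2) -
    Polynomial.eval₂ C (X 2) (-evL l (pderiv 1 f)) * (X 1 - C l.1)

lemma phi_f (p : ℕ) [CharP K p] (f : MvPolynomial (Fin 3) K) (hf : Prime f)
    (hp : f.totalDegree < p) (ha : pderiv 0 f ≠ 0) (hPhi : f ∣ Phi f) (l : K × K × K)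
    (hl : evL l f = 0) : phi f l f = 0 := by
  ext1 j
  obtain ⟨c, hc⟩ := star p f hf hp ha hPhi j
  simp only [phi, RingHom.comp_apply, Polynomial.coe_mapRingHom, Polynomial.coeff_map]
  have : (tau f).toRingHom f = tau f f := rfl
  rw [this, hc]
  simp [hl]

lemma f_dvd_GG (p : ℕ) [CharP K p] (f : MvPolynomial (Fin 3) K) (hf : Prime f)
    (hp : f.totalDegree < p) (ha : pderiv 0 f ≠ 0) (hPhi : f ∣ Phi f) (l : K × K × K)
    (hl : evL l f = 0) (hA : evL l (pderiv 0 f) ≠ 0) : f ∣ GG f l := by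
  by_contra hcon
  have h1 := phi_f p f hf hp ha hPhi l hl
  have h2 : phi f l (GG f l) = 0 := by
    simp only [GG, map_sub, map_mul, phi_Y, phi_X0, phi_X1, phi_X2, phi_C, map_add]
    ring
  set F := finSuccEquiv K 2 f with hF
  set G := finSuccEquiv K 2 (GG f l) with hG
  have hF1 : Prime F := (MulEquiv.prime_iff (finSuccEquiv K 2).toMulEquiv).mpr hf
  have hG1 : ¬ F ∣ G := fun hh => hcon ((map_dvd_iff (finSuccEquiv K 2)).mp hh)
  have hR := res_ne_zero F G hF1 hG1
  have hdeg : F.natDegree ≠ 0 := by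
    rw [hF, natDegree_finSuccEquiv]
    intro h
    apply ha
    apply pderiv_eq_zero_of_notMem_vars
    intro h3
    rw [degreeOf_eq_zero_iff'] at h
    obtain ⟨d, hd, hd2⟩ := mem_vars_iff_mem_support 0 |>.mp h3
    exact (Finsupp.mem_support_iff.mp hd2) (h d hd)
  obtain ⟨u, v, -, -, huv⟩ := Polynomial.exists_mul_add_mul_eq_C_resultant F G le_rfl le_rfl
      (Or.inl hdeg)
  apply hR
  apply phi_inj f l hA
  rw [← huv, map_add, map_mul, map_mul, hF, hG, AlgEquiv.symm_apply_apply,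
    AlgEquiv.symm_apply_apply, map_add, map_mul, map_mul, h1, h2]
  simp

lemma no_z_card (p : ℕ) [CharP K p] (f : MvPolynomial (Fin 3) K) (hf : f ≠ 0)
    (hp : f.totalDegree < p) (ha : pderiv 0 f = 0)
    (Y : Finset (K × K × K)) (hY : Set.InjOn Prod.fst (Y : Set (K × K × K)))
    (h : ∀ m ∈ Y, evM m f = 0) : Y.card ≤ f.totalDegree := by
  have hdeg : (finSuccEquiv K 2 f).natDegree = 0 := by
    rw [natDegree_finSuccEquiv, degreeOf_eq_zero_iff']
    intro m hm
    by_contra hne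
    have h1 : Finsupp.single 0 1 ≤ m := by
      rw [Finsupp.single_le_iff]; omega
    have h2 := congrArg (coeff (m - Finsupp.single 0 1)) ha
    rw [coeff_pderiv, tsub_add_cancel_of_le h1, coeff_zero] at h2
    rw [mem_support_iff] at hm
    have h3 : ((m 0 : ℕ) : K) = 0 := by
      have := (mul_eq_zero.mp h2).resolve_left hm
      rw [← this]
      have : (m - Finsupp.single (0 : Fin 3) 1 : Fin 3 →₀ ℕ) 0 = m 0 - 1 := by simp
      rw [this]
      have : m 0 = m 0 - 1 + 1 := by omega
      conv_lhs => rw [this]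
      push_cast; rfl
    rw [CharP.cast_eq_zero_iff K p] at h3
    have h4 := Nat.le_of_dvd (by omega) h3
    have h5 := le_totalDegree (mem_support_iff.mpr hm)
    have h6 : m 0 ≤ m.sum fun _ e => e := by
      rw [Finsupp.sum_fintype _ _ (by simp)]
      exact Finset.single_le_sum (f := fun i => m i) (fun _ _ => Nat.zero_le _) (Finset.mem_univ 0)
    omega
  obtain ⟨c, hc⟩ := Polynomial.natDegree_eq_zero.mp hdeg
  have hc0 : c ≠ 0 := by
    rintro rfl
    apply hf
    have : finSuccEquiv K 2 f = 0 := by simpa using hc.symm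
    simpa using this
  have h1 := card_ev2 c hc0 (Y.image Prod.fst) (by
    intro b hb
    obtain ⟨m, hm, rfl⟩ := Finset.mem_image.mp hb
    have := h m hm
    rw [evM_finSucc, ← hc] at this
    simpa using this)
  rw [Finset.card_image_of_injOn hY] at h1
  have h2 := coeff_deg f 0
  rw [← hc] at h2
  simp only [Polynomial.coeff_C_zero] at h2
  omega

lemma prime_comp (p : ℕ) [CharP K p] (f : MvPolynomial (Fin 3) K) (hf : Prime f)
    (hp : f.totalDegree < p) (L M : Finset (K × K × K))
    (hL : Set.InjOn Prod.fst (L : Set (K × K × K))) (hM : Set.InjOn Prod.fst (M : Set (K × K × K)))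
    (k : ℕ) (hk : ∀ m1 ∈ M, ∀ m2 ∈ M, m1 ≠ m2 → (L.filter fun l => Inc l m1 ∧ Inc l m2).card ≤ k) :
    ∃ Ex ⊆ M, Ex.card ≤ 6 * f.totalDegree ^ 2 ∧ ∀ m ∈ M, m ∉ Ex → evM m f = 0 →
      (L.filter fun l => evL l f = 0 ∧ Inc l m).card ≤ f.totalDegree + k := by
  set e := f.totalDegree with he
  have he1 : 1 ≤ e := by
    by_contra hcon
    have h0 : f.totalDegree = 0 := by omega
    rw [totalDegree_eq_zero_iff_eq_C] at h0
    apply hf.not_isUnit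
    rw [h0]
    refine IsUnit.map C (Ne.isUnit ?_)
    intro h1; rw [h1] at h0; exact hf.ne_zero (by simpa using h0)
  have hsub : ∀ (P : K × K × K → Prop) [DecidablePred P], Set.InjOn Prod.fst ((M.filter P : Finset _) : Set (K × K × K)) :=
    fun P _ => hM.mono (coe_subset.mpr (filter_subset _ _))
  have hsubL : ∀ (P : K × K × K → Prop) [DecidablePred P], Set.InjOn Prod.fst ((L.filter P : Finset _) : Set (K × K × K)) :=
    fun P _ => hL.mono (coe_subset.mpr (filter_subset _ _))
  have hall : (M.filter fun m => evM m f = 0).card ≤ 6 * e ^ 2 → ∃ Ex ⊆ M, Ex.card ≤ 6 * e ^ 2 ∧ ∀ m ∈ M, m ∉ Ex → evM m f = 0 →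
      (L.filter fun l => evL l f = 0 ∧ Inc l m).card ≤ e + k := by
    intro h
    refine ⟨M.filter fun m => evM m f = 0, filter_subset _ _, h, ?_⟩
    intro m hm hm2 hm3
    exact absurd (mem_filter.mpr ⟨hm, hm3⟩) hm2
  by_cases ha : pderiv 0 f = 0
  · apply hall
    have := no_z_card p f hf.ne_zero hp ha (M.filter fun m => evM m f = 0) (hsub _)
      (fun m hm => (mem_filter.mp hm).2)
    nlinarith
  by_cases hPhi : f ∣ Phi f
  swap
  · apply hall
    have := bezout f (Phi f) hf hPhi (M.filter fun m => evM m f = 0) (hsub _)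
      (fun m hm => ⟨(mem_filter.mp hm).2, evM_Phi m f (mem_filter.mp hm).2⟩)
    have h2 := Phi_deg f
    nlinarith
  by_cases hl : ∃ l1 ∈ L, evL l1 f = 0 ∧ evL l1 (pderiv 0 f) ≠ 0
  · obtain ⟨l1, -, hl1, hA⟩ := hl
    have hdvd := f_dvd_GG p f hf hp ha hPhi l1 hl1 hA
    set A := evL l1 (pderiv 0 f) with hAdef
    have hX : (M.filter fun m => evM m f = 0 ∧ A.eval m.1 = 0).card ≤ e := by
      have h1 : ((M.filter fun m => evM m f = 0 ∧ A.eval m.1 = 0).image Prod.fst).val ⊆ A.roots := by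
        intro x hx
        simp only [Finset.mem_val, Finset.mem_image] at hx
        obtain ⟨l, hl, rfl⟩ := hx
        rw [Polynomial.mem_roots hA, Polynomial.IsRoot]
        exact (mem_filter.mp hl).2.2
      have h2 := Polynomial.card_le_degree_of_subset_roots h1
      rw [Finset.card_image_of_injOn (hsub _)] at h2
      exact h2.trans ((evL_natDegree _ _).trans (pderiv_deg' _ _))
    have hinc : ∀ m, evM m f = 0 → A.eval m.1 ≠ 0 → ∀ l, evL l f = 0 → Inc l m := by
      intro m hm hAm l hl
      obtain ⟨c, hc⟩ := hdvd
      have g1 : evM m (GG f l1) = 0 := by rw [hc, map_mul, hm, zero_mul]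
      have g2 : evL l (GG f l1) = 0 := by rw [hc, map_mul, hl, zero_mul]
      have g3 := eval_evM m (GG f l1) l.1
      have g4 := eval_evL l (GG f l1) m.1
      have hev : ∀ (v : Fin 3 → K) (P : Polynomial K), eval v (Polynomial.eval₂ C (X 2) P) = P.eval (v 2) := by
        intro v P
        rw [Polynomial.hom_eval₂]
        have : (eval v).comp (C : K →+* MvPolynomial (Fin 3) K) = RingHom.id K := by ext; simp
        rw [this]; simp
      rw [g1] at g3
      rw [g2] at g4
      simp only [GG, map_sub, map_mul, hev, eval_X, eval_C, Polynomial.eval_zero, ← hAdef] at g3 g4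
      simp at g3 g4
      unfold Inc
      apply mul_left_cancel₀ hAm
      linear_combination g3 - g4
    by_cases htwo : ∃ m1 ∈ M.filter (fun m => evM m f = 0 ∧ A.eval m.1 ≠ 0),
        ∃ m2 ∈ M.filter (fun m => evM m f = 0 ∧ A.eval m.1 ≠ 0), m1 ≠ m2
    · obtain ⟨m1, hm1, m2, hm2, hne⟩ := htwo
      rw [mem_filter] at hm1 hm2
      refine ⟨_, filter_subset _ _, hX.trans (by nlinarith), ?_⟩
      intro m _ _ _
      refine le_trans (card_le_card ?_) ((hk m1 hm1.1 m2 hm2.1 hne).trans (Nat.le_add_left _ _))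
      intro l hl
      rw [mem_filter] at hl ⊢
      exact ⟨hl.1, hinc m1 hm1.2.1 hm1.2.2 l hl.2.1, hinc m2 hm2.2.1 hm2.2.2 l hl.2.1⟩
    · apply hall
      push Not at htwo
      have h1 : (M.filter fun m => evM m f = 0 ∧ A.eval m.1 ≠ 0).card ≤ 1 :=
        Finset.card_le_one.mpr htwo
      have h2 : (M.filter fun m => evM m f = 0) ⊆
          (M.filter fun m => evM m f = 0 ∧ A.eval m.1 = 0) ∪
          (M.filter fun m => evM m f = 0 ∧ A.eval m.1 ≠ 0) := by
        intro m hm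
        rw [mem_filter] at hm
        by_cases h : A.eval m.1 = 0 <;> simp [hm.1, hm.2, h]
      have h3 := (card_le_card h2).trans (card_union_le _ _)
      nlinarith
  · push Not at hl
    refine ⟨M.filter fun m => evM m f = 0 ∧ evM m (pderiv 0 f) = 0, filter_subset _ _, ?_, ?_⟩
    · have := bezout f (pderiv 0 f) hf (not_dvd_pderiv 0 ha)
        (M.filter fun m => evM m f = 0 ∧ evM m (pderiv 0 f) = 0) (hsub _)
        (fun m hm => (mem_filter.mp hm).2)
      have h2 := pderiv_deg' 0 f
      nlinarith
    · intro m hm hm2 hm3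
      have hne : evM m (pderiv 0 f) ≠ 0 := fun h => hm2 (mem_filter.mpr ⟨hm, hm3, h⟩)
      have := hits_le m (pderiv 0 f) hne (L.filter fun l => evL l f = 0 ∧ Inc l m) (hsubL _) (by
        intro l hl'
        rw [mem_filter] at hl'
        exact ⟨hl l hl'.1 hl'.2.1, hl'.2.2⟩)
      have h2 := pderiv_deg' 0 f
      omega

end Rud

namespace Rud
open MvPolynomial
open scoped Classical
variable {K : Type*} [Field K]

lemma gen_comp (p : ℕ) [CharP K p] (L M : Finset (K × K × K))
    (hL : Set.InjOn Prod.fst (L : Set (K × K × K))) (hM : Set.InjOn Prod.fst (M : Set (K × K × K)))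
    (k : ℕ) (hk : ∀ m1 ∈ M, ∀ m2 ∈ M, m1 ≠ m2 → (L.filter fun l => Inc l m1 ∧ Inc l m2).card ≤ k)
    (f : MvPolynomial (Fin 3) K) :
    f ≠ 0 → f.totalDegree < p → 
    ∃ Ex ⊆ M, Ex.card ≤ 6 * f.totalDegree ^ 2 ∧ ∀ m ∈ M, m ∉ Ex →
      (L.filter fun l => evL l f = 0 ∧ Inc l m).card ≤ f.totalDegree + k := by
  have hsub : ∀ (P : K × K × K → Prop) [DecidablePred P], Set.InjOn Prod.fst ((M.filter P : Finset _) : Set (K × K × K)) :=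
    fun P _ => hM.mono (coe_subset.mpr (filter_subset _ _))
  have hsubL : ∀ (P : K × K × K → Prop) [DecidablePred P], Set.InjOn Prod.fst ((L.filter P : Finset _) : Set (K × K × K)) :=
    fun P _ => hL.mono (coe_subset.mpr (filter_subset _ _))
  induction f using UniqueFactorizationMonoid.induction_on_prime with
  | h₁ => intro h; exact absurd rfl h
  | h₂ u hu =>
    intro _ _
    refine ⟨∅, by simp, by simp, ?_⟩
    intro m _ _
    have : (L.filter fun l => evL l u = 0 ∧ Inc l m) = ∅ := by
      rw [filter_eq_empty_iff]
      rintro l _ ⟨h, -⟩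
      exact (hu.map (evL l)).ne_zero h
    rw [this]; simp
  | h₃ h f1 hh hf1 ih =>
    intro hne hdeg
    have hd : (f1 * h).totalDegree = f1.totalDegree + h.totalDegree :=
      totalDegree_mul_of_isDomain hf1.ne_zero hh
    rw [hd] at hdeg ⊢
    obtain ⟨Ex, hEx, hcard, hhit⟩ := ih hh (by omega)
    by_cases hdvd : f1 ∣ h
    · refine ⟨Ex, hEx, hcard.trans (by gcongr; omega), ?_⟩
      intro m hm hm2
      refine (le_trans (card_le_card ?_) (hhit m hm hm2)).trans (by omega)
      intro l hl
      rw [mem_filter] at hl ⊢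
      refine ⟨hl.1, ?_, hl.2.2⟩
      have := hl.2.1
      rw [map_mul] at this
      rcases mul_eq_zero.mp this with h1 | h1
      · obtain ⟨c, rfl⟩ := hdvd; rw [map_mul, h1, zero_mul]
      · exact h1
    · obtain ⟨Ex1, hEx1, hcard1, hhit1⟩ := prime_comp p f1 hf1 (by omega) L M hL hM k hk
      set Y := M.filter fun m => evM m f1 = 0 ∧ evM m h = 0 with hY
      have hYc := bezout f1 h hf1 hdvd Y (hsub _) (fun m hm => (mem_filter.mp hm).2)
      refine ⟨Ex ∪ Ex1 ∪ Y, union_subset (union_subset hEx hEx1) (filter_subset _ _), ?_, ?_⟩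
      · have h1 := card_union_le (Ex ∪ Ex1) Y
        have h2 := card_union_le Ex Ex1
        nlinarith
      · intro m hm hm2
        simp only [mem_union, not_or] at hm2
        have hsplit : (L.filter fun l => evL l (f1 * h) = 0 ∧ Inc l m) ⊆
          (L.filter fun l => evL l f1 = 0 ∧ Inc l m) ∪ (L.filter fun l => evL l h = 0 ∧ Inc l m) := by
          intro l hl
          simp only [mem_union, mem_filter, map_mul, mul_eq_zero] at hl ⊢
          tauto
        have hs := (card_le_card hsplit).trans (card_union_le _ _)
        by_cases hz : evM m f1 = 0
        · have g1 := hhit1 m hm hm2.1.2 hz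
          have hz2 : evM m h ≠ 0 := fun h0 => hm2.2 (mem_filter.mpr ⟨hm, hz, h0⟩)
          have g2 := hits_le m h hz2 (L.filter fun l => evL l h = 0 ∧ Inc l m) (hsubL _)
            (fun l hl => (mem_filter.mp hl).2)
          omega
        · have g1 := hhit m hm hm2.1.1
          have g2 := hits_le m f1 hz (L.filter fun l => evL l f1 = 0 ∧ Inc l m) (hsubL _)
            (fun l hl => (mem_filter.mp hl).2)
          omega

noncomputable def expo {t : ℕ} (i : Fin 3 → Fin (t+1)) : Fin 3 →₀ ℕ :=
  Finsupp.equivFunOnFinite.symm (fun a => (i a : ℕ))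

lemma expo_inj {t : ℕ} : Function.Injective (expo (t := t)) := by
  intro i j h
  funext a
  have := congrArg (fun v => v a) h
  simpa [expo, Fin.ext_iff] using this

noncomputable def boxPoly (t : ℕ) (c : (Fin 3 → Fin (t+1)) → K) : MvPolynomial (Fin 3) K :=
  ∑ i, monomial (expo i) (c i)

lemma box_deg (t : ℕ) (c : (Fin 3 → Fin (t+1)) → K) : (boxPoly t c).totalDegree ≤ 3 * t := by
  refine totalDegree_finsetSum_le (fun i _ => ?_)
  refine (totalDegree_monomial_le _ _).trans ?_
  rw [Finsupp.sum_fintype _ _ (by simp), Fin.sum_univ_three]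
  simp only [expo, Finsupp.equivFunOnFinite_symm_apply_apply, id]
  have := (i 0).2; have := (i 1).2; have := (i 2).2
  omega

lemma exists_poly (L : Finset (K × K × K)) (t : ℕ) (h : 3 * L.card ≤ (t+1)^2) :
    ∃ f : MvPolynomial (Fin 3) K, f ≠ 0 ∧ f.totalDegree ≤ 3 * t ∧ ∀ l ∈ L, evL l f = 0 := by
  let Λ : ((Fin 3 → Fin (t+1)) → K) →ₗ[K] (L × Fin (3*t+1) → K) :=
    { toFun := fun c x => (evL (x.1 : K × K × K) (boxPoly t c)).coeff x.2
      map_add' := by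
        intro c d; funext x
        simp [boxPoly, Finset.sum_add_distrib]
      map_smul' := by
        intro r c; funext x
        have : boxPoly t (r • c) = C r * boxPoly t c := by
          simp [boxPoly, Finset.mul_sum, C_mul_monomial]
        simp only [this, map_mul]
        have h2 : evL (x.1 : K × K × K) (C r) = Polynomial.C r := by simp [evL]
        rw [h2, Polynomial.coeff_C_mul]; simp }
  have hker : LinearMap.ker Λ ≠ ⊥ := by
    apply LinearMap.ker_ne_bot_of_finrank_lt
    simp only [Module.finrank_fintype_fun_eq_card, Fintype.card_prod, Fintype.card_coe,
      Fintype.card_fin, Fintype.card_fun]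
    nlinarith
  obtain ⟨c, hc, hc0⟩ := Submodule.exists_mem_ne_zero_of_ne_bot hker
  refine ⟨boxPoly t c, ?_, box_deg t c, ?_⟩
  · intro h0
    apply hc0
    funext i
    have := congrArg (coeff (expo i)) h0
    simp only [boxPoly, coeff_sum, coeff_monomial, coeff_zero] at this
    simpa [expo_inj.eq_iff] using this
  · intro l hl
    ext j
    by_cases hj : j < 3 * t + 1
    · have := congrFun (LinearMap.mem_ker.mp hc) (⟨l, hl⟩, ⟨j, hj⟩)
      simpa [Λ] using this
    · rw [Polynomial.coeff_eq_zero_of_natDegree_lt]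
      · simp
      · have := (evL_natDegree l (boxPoly t c)).trans (box_deg t c)
        omega

lemma rich_bound (p : ℕ) [CharP K p] (L M : Finset (K × K × K))
    (hL : Set.InjOn Prod.fst (L : Set (K × K × K))) (hM : Set.InjOn Prod.fst (M : Set (K × K × K)))
    (k : ℕ) (hk : ∀ m1 ∈ M, ∀ m2 ∈ M, m1 ≠ m2 → (L.filter fun l => Inc l m1 ∧ Inc l m2).card ≤ k)
    (t : ℕ) (ht : 3 * t < p) (h : 3 * L.card ≤ (t+1)^2) :
    (M.filter fun m => 3 * t + k < (L.filter fun l => Inc l m).card).card ≤ 54 * t ^ 2 := by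
  obtain ⟨f, hf, hd, hz⟩ := exists_poly L t h
  obtain ⟨Ex, -, hc, hh⟩ := gen_comp p L M hL hM k hk f hf (by omega)
  have : (M.filter fun m => 3 * t + k < (L.filter fun l => Inc l m).card) ⊆ Ex := by
    intro m hm
    rw [mem_filter] at hm
    by_contra hne
    have h1 := hh m hm.1 hne
    have h2 : (L.filter fun l => evL l f = 0 ∧ Inc l m) = L.filter fun l => Inc l m :=
      filter_congr (fun l hl => by simp [hz l hl])
    rw [h2] at h1
    omega
  refine (card_le_card this).trans (hc.trans ?_)
  nlinarith

end Rud

namespace Rud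
open scoped Classical

lemma sample {α β : Type*} (L : Finset α) (M : Finset β) (R : α → β → Prop) (q r T : ℕ) (hq : 1 ≤ q)
    (hr : ∀ m ∈ M, r ≤ (L.filter fun l => R l m).card) (hrq : 2 * q * (T + 3) ≤ r) :
    ∃ S ⊆ L, (S.card : ℝ) ≤ 2 + 2 * L.card / q ∧
      2 * (M.filter fun m => (S.filter fun l => R l m).card ≤ T).card ≤ M.card := by
  have hq0 : (0 : ℝ) < q := by exact_mod_cast hq
  have hq1 : (1 : ℝ) ≤ q := by exact_mod_cast hq
  set w : Finset α → ℝ := fun S => (∏ _l ∈ S, (1 / q : ℝ)) * ∏ _l ∈ L \ S, (1 - 1 / q : ℝ) with hw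
  have h1q : (0 : ℝ) ≤ 1 - 1 / q := by
    rw [sub_nonneg, div_le_one hq0]; exact hq1
  have hw0 : ∀ S, 0 ≤ w S := fun S =>
    mul_nonneg (prod_nonneg fun _ _ => by positivity) (prod_nonneg fun _ _ => h1q)
  have hgen : ∀ u : α → ℝ, ∑ S ∈ L.powerset, w S * ∏ l ∈ S, u l = ∏ l ∈ L, (u l / q + (1 - 1 / q)) := by
    intro u
    rw [Finset.prod_add]
    refine sum_congr rfl fun S _ => ?_
    rw [hw]
    simp only
    rw [mul_right_comm, ← prod_mul_distrib]
    congr 1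
    refine prod_congr rfl fun l _ => by ring
  have hw1 : ∑ S ∈ L.powerset, w S = 1 := by
    have := hgen (fun _ => 1)
    simpa using this
  have hsize : ∑ S ∈ L.powerset, w S * 2 ^ S.card ≤ Real.exp (L.card / q) := by
    have := hgen (fun _ => 2)
    simp only [prod_const] at this
    rw [this]
    have h2 : (2 / q + (1 - 1 / q) : ℝ) = 1 / q + 1 := by ring
    rw [h2]
    calc (1 / q + 1 : ℝ) ^ L.card ≤ (Real.exp (1 / q)) ^ L.card := by
          gcongr; exact Real.add_one_le_exp _
      _ = _ := by rw [← Real.exp_nat_mul]; congr 1; ring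
  have hhit : ∀ m ∈ M, ∑ S ∈ L.powerset, w S * (1 / 2) ^ (S.filter fun l => R l m).card ≤
      Real.exp (- (r / (2 * q))) := by
    intro m hm
    have := hgen (fun l => if R l m then 1 / 2 else 1)
    simp only [prod_ite, prod_const, one_pow, mul_one] at this
    rw [this]
    have h2 : ∀ l ∈ L, ((if R l m then 1 / 2 else 1 : ℝ) / q + (1 - 1 / q)) =
        if R l m then (1 - 1 / (2 * q) : ℝ) else 1 := by
      intro l _
      split_ifs
      · field_simp; ring
      · ring
    rw [prod_congr rfl h2]
    simp only [prod_ite, prod_const, one_pow, mul_one]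
    have h3 : (0 : ℝ) ≤ 1 - 1 / (2 * q) := by
      rw [sub_nonneg, div_le_one (by positivity)]; linarith
    have h4 : (1 - 1 / (2 * q) : ℝ) ≤ Real.exp (- (1 / (2 * q))) := by
      have := Real.add_one_le_exp (- (1 / (2 * q)) : ℝ); linarith
    calc (1 - 1 / (2 * q) : ℝ) ^ (L.filter fun l => R l m).card
        ≤ (1 - 1 / (2 * q) : ℝ) ^ r := by
          apply pow_le_pow_of_le_one h3 _ (hr m hm)
          have : (0 : ℝ) ≤ 1 / (2 * q) := by positivity
          linarith
      _ ≤ (Real.exp (- (1 / (2 * q)))) ^ r := by gcongr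
      _ = _ := by rw [← Real.exp_nat_mul]; congr 1; ring
  set E1 := Real.exp (L.card / q) with hE1
  set E2 := Real.exp (- (r / (2 * q)) : ℝ) with hE2
  have hE1p : 0 < E1 := Real.exp_pos _
  have hE2p : 0 < E2 := Real.exp_pos _
  -- existence
  obtain ⟨S, hS, hS2⟩ : ∃ S ∈ L.powerset, 2 ^ S.card / E1 +
      (∑ m ∈ M, (1 / 2 : ℝ) ^ (S.filter fun l => R l m).card) / (E2 * (M.card + 1)) ≤ 2 := by
    by_contra hcon
    push Not at hcon
    have h5 : ∑ S ∈ L.powerset, w S * (2 ^ S.card / E1 +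
      (∑ m ∈ M, (1 / 2 : ℝ) ^ (S.filter fun l => R l m).card) / (E2 * (M.card + 1))) ≤ 2 := by
      simp only [mul_add, sum_add_distrib]
      have a1 : ∑ S ∈ L.powerset, w S * (2 ^ S.card / E1) ≤ 1 := by
        simp only [← mul_div_assoc]
        rw [← sum_div, div_le_one hE1p]
        exact hsize
      have a2 : ∑ S ∈ L.powerset, w S * ((∑ m ∈ M, (1 / 2 : ℝ) ^ (S.filter fun l => R l m).card) / (E2 * M.card + E2 * 1)) ≤ 1 := by
        simp only [← mul_div_assoc]
        rw [← sum_div, div_le_one (by positivity)]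
        simp only [mul_sum]
        rw [sum_comm]
        refine (sum_le_sum hhit).trans ?_
        rw [sum_const, nsmul_eq_mul]
        nlinarith
      linarith
    have h6 : ∑ S ∈ L.powerset, w S * 2 < ∑ S ∈ L.powerset, w S * (2 ^ S.card / E1 +
      (∑ m ∈ M, (1 / 2 : ℝ) ^ (S.filter fun l => R l m).card) / (E2 * (M.card + 1))) := by
      apply sum_lt_sum
      · intro S hS
        exact mul_le_mul_of_nonneg_left (hcon S hS).le (hw0 S)
      · by_contra h7
        push Not at h7
        have : ∑ S ∈ L.powerset, w S ≤ 0 := by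
          apply sum_nonpos
          intro S hS
          by_contra h8
          push Not at h8
          have := h7 S hS
          have h9 := mul_lt_mul_of_pos_left (hcon S hS) h8
          linarith
        linarith
    rw [← sum_mul, hw1] at h6
    linarith
  refine ⟨S, mem_powerset.mp hS, ?_, ?_⟩
  · have h1 : 2 ^ S.card / E1 ≤ 2 := by
      have : (0 : ℝ) ≤ (∑ m ∈ M, (1 / 2 : ℝ) ^ (S.filter fun l => R l m).card) / (E2 * (M.card + 1)) := by
        positivity
      linarith
    rw [div_le_iff₀ hE1p] at h1
    have h2 := Real.log_le_log (by positivity) h1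
    rw [Real.log_pow, Real.log_mul (by norm_num) hE1p.ne', hE1, Real.log_exp] at h2
    have l1 := Real.log_two_gt_d9
    have : (0:ℝ) ≤ L.card / q := by positivity
    have e : 2 + 2 * (L.card : ℝ) / q = 2 + 2 * (L.card / q) := by ring
    rw [e]
    have h3 : (S.card : ℝ) * Real.log 2 ≤ (2 + 2 * (L.card / q)) * Real.log 2 := by nlinarith
    exact le_of_mul_le_mul_right h3 (by linarith)
  · rcases M.eq_empty_or_nonempty with rfl | hMne
    · simp
    have hMc : (1 : ℝ) ≤ M.card := by exact_mod_cast hMne.card_pos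
    have h1 : (∑ m ∈ M, (1 / 2 : ℝ) ^ (S.filter fun l => R l m).card) / (E2 * (M.card + 1)) ≤ 2 := by
      have : 0 ≤ 2 ^ S.card / E1 := by positivity
      linarith
    rw [div_le_iff₀ (by positivity)] at h1
    set B := M.filter fun m => (S.filter fun l => R l m).card ≤ T with hB
    have h2 : (B.card : ℝ) * (1 / 2) ^ T ≤ ∑ m ∈ M, (1 / 2 : ℝ) ^ (S.filter fun l => R l m).card := by
      calc (B.card : ℝ) * (1 / 2) ^ T = ∑ m ∈ B, (1 / 2 : ℝ) ^ T := by simp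
        _ ≤ ∑ m ∈ B, (1 / 2 : ℝ) ^ (S.filter fun l => R l m).card := by
          apply sum_le_sum
          intro m hm
          exact pow_le_pow_of_le_one (by norm_num) (by norm_num) (mem_filter.mp hm).2
        _ ≤ _ := sum_le_sum_of_subset_of_nonneg (filter_subset _ _) (fun _ _ _ => by positivity)
    have h3 : E2 ≤ (1 / 2) ^ (T + 3) := by
      have a1 : ((T : ℝ) + 3) ≤ r / (2 * q) := by
        rw [le_div_iff₀ (by positivity)]
        have : (2 * q * (T + 3) : ℝ) ≤ r := by exact_mod_cast hrq
        linarith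
      calc E2 ≤ Real.exp (((T + 3 : ℕ) : ℝ) * (-1)) := by
            rw [hE2]; apply Real.exp_le_exp.mpr; push_cast; linarith
        _ = (Real.exp (-1)) ^ (T + 3) := by rw [Real.exp_nat_mul]
        _ ≤ _ := by
            gcongr
            rw [Real.exp_neg, one_div]
            apply inv_anti₀ (by norm_num)
            have := Real.add_one_le_exp (1 : ℝ); linarith
    have h4 : (B.card : ℝ) * (1 / 2) ^ T ≤ (1 / 2) ^ T * (M.card / 2) := by
      rw [pow_add] at h3
      have : (0:ℝ) < (1/2) ^ T := by positivity
      calc _ ≤ 2 * (E2 * (M.card + 1)) := h2.trans h1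
        _ ≤ 2 * (((1 / 2) ^ T * (1 / 2) ^ 3) * (2 * M.card)) := by gcongr; linarith
        _ = _ := by ring
    have h5 : (B.card : ℝ) ≤ M.card / 2 := by
      have : (0:ℝ) < (1/2) ^ T := by positivity
      rw [mul_comm] at h4
      exact le_of_mul_le_mul_left h4 this
    have : (2 * B.card : ℝ) ≤ M.card := by linarith
    exact_mod_cast this

end Rud

namespace Rud
open scoped Classical
variable {K : Type*} [Field K]

set_option maxHeartbeats 1000000 in
lemma rich_r (p : ℕ) [CharP K p] (L M : Finset (K × K × K))
    (hL : Set.InjOn Prod.fst (L : Set (K × K × K))) (hM : Set.InjOn Prod.fst (M : Set (K × K × K)))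
    (k N : ℕ) (hk1 : 1 ≤ k)
    (hk : ∀ m1 ∈ M, ∀ m2 ∈ M, m1 ≠ m2 → (L.filter fun l => Inc l m1 ∧ Inc l m2).card ≤ k)
    (hN : L.card = N) (hN2 : M.card = N) (hp : 108 * N < p ^ 2) (r : ℕ) (hr : 1 ≤ r) :
    (r : ℝ) * (M.filter fun m => r ≤ (L.filter fun l => Inc l m).card).card
      ≤ 110000 * (N * √N + k * N) := by
  set M' := M.filter fun m => r ≤ (L.filter fun l => Inc l m).card with hM'
  have hM'N : (M'.card : ℝ) ≤ N := by
    rw [← hN2]; exact_mod_cast card_le_card (filter_subset _ _)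
  have hsq : √(N:ℝ) * √N = N := Real.mul_self_sqrt (by positivity)
  have hs0 : 0 ≤ √(N:ℝ) := Real.sqrt_nonneg _
  have hk1' : (1:ℝ) ≤ k := by exact_mod_cast hk1
  have hN0 : (0:ℝ) ≤ N := by positivity
  by_cases h1 : (r : ℝ) < 42 * √N
  · calc (r : ℝ) * M'.card ≤ (42 * √N) * N := by gcongr
      _ ≤ _ := by nlinarith [mul_nonneg hN0 hs0, mul_nonneg (by positivity : (0:ℝ) ≤ k) hN0]
  by_cases h2 : (r : ℝ) < 16 * k
  · calc (r : ℝ) * M'.card ≤ (16 * k) * N := by gcongr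
      _ ≤ _ := by nlinarith [mul_nonneg hN0 hs0, mul_nonneg (by positivity : (0:ℝ) ≤ k) hN0]
  push Not at h1 h2
  rcases M'.eq_empty_or_nonempty with he | hne
  · rw [he]; simp; positivity
  have hrN : r ≤ N := by
    obtain ⟨m, hm⟩ := hne
    rw [← hN]
    exact (mem_filter.mp hm).2.trans (card_le_card (filter_subset _ _))
  have hNpos : (1:ℝ) ≤ N := by exact_mod_cast hr.trans hrN
  have hr1 : (1:ℝ) ≤ r := by exact_mod_cast hr
  set x : ℝ := min ((r:ℝ)^2 / (1764 * N)) (r / (16 * k)) with hx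
  have hx1 : 1 ≤ x := by
    apply le_min
    · rw [le_div_iff₀ (by positivity)]; nlinarith
    · rw [le_div_iff₀ (by positivity)]; linarith
  set q := ⌊x⌋₊ with hq
  have hq1 : 1 ≤ q := (Nat.le_floor_iff (by linarith)).mpr (by simpa using hx1)
  have hqx : (q : ℝ) ≤ x := Nat.floor_le (by linarith)
  have hxq : x < q + 1 := Nat.lt_floor_add_one x
  have hq1' : (1:ℝ) ≤ q := by exact_mod_cast hq1
  have hxq2 : x ≤ 2 * q := by linarith
  have hqr1 : (q : ℝ) * (1764 * N) ≤ r ^ 2 := by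
    have := hqx.trans (min_le_left _ _)
    rwa [le_div_iff₀ (by positivity)] at this
  have hqr2 : (q : ℝ) * (16 * k) ≤ r := by
    have := hqx.trans (min_le_right _ _)
    rwa [le_div_iff₀ (by positivity)] at this
  have hqN : (q : ℝ) ≤ N := by
    have : (r : ℝ) ≤ N := by exact_mod_cast hrN
    nlinarith
  set y : ℝ := 12 * N / q with hy
  have hy0 : 0 ≤ y := by positivity
  have hyq : y * q = 12 * N := by rw [hy]; field_simp
  set t := ⌊√y⌋₊ with ht
  have ht1 : (t : ℝ) ≤ √y := Nat.floor_le (Real.sqrt_nonneg _)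
  have ht2 : √y < t + 1 := Nat.lt_floor_add_one _
  have hysq : √y * √y = y := Real.mul_self_sqrt hy0
  have hty : (t : ℝ) ^ 2 ≤ y := by nlinarith [Real.sqrt_nonneg y]
  have hty2 : y ≤ ((t : ℝ) + 1) ^ 2 := by nlinarith [Real.sqrt_nonneg y]
  have hyN : y ≤ 12 * N := by nlinarith
  have htp : 3 * t < p := by
    have a : ((3 * t : ℕ) : ℝ) ^ 2 < (p : ℝ) ^ 2 := by
      have : ((108 * N : ℕ) : ℝ) < ((p ^ 2 : ℕ) : ℝ) := by exact_mod_cast hp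
      push_cast at this ⊢
      nlinarith
    have := lt_of_pow_lt_pow_left₀ 2 (by positivity) a
    exact_mod_cast this
  -- condition on r
  have hqt : (q : ℝ) * t * 12 ≤ r := by
    have a : ((q : ℝ) * t * 12) ^ 2 ≤ (r : ℝ) ^ 2 := by
      calc ((q : ℝ) * t * 12) ^ 2 = 144 * q * q * t ^ 2 := by ring
        _ ≤ 144 * q * q * y := by gcongr
        _ = 144 * q * (y * q) := by ring
        _ = q * (1728 * N) := by rw [hyq]; ring
        _ ≤ q * (1764 * N) := by gcongr; norm_num
        _ ≤ _ := hqr1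
    exact le_of_sq_le_sq a (by positivity)
  have hrq : 2 * q * (3 * t + k + 3) ≤ r := by
    have : ((2 * q * (3 * t + k + 3) : ℕ) : ℝ) ≤ r := by
      push_cast
      have a1 : (q : ℝ) ≤ q * k := by
        have := mul_le_mul_of_nonneg_left hk1' (by positivity : (0:ℝ) ≤ q)
        linarith
      linarith
    exact_mod_cast this
  obtain ⟨S, hSL, hSc, hSM⟩ := sample L M' Inc q r (3 * t + k) hq1
    (fun m hm => (mem_filter.mp hm).2) hrq
  have hSt : 3 * S.card ≤ (t + 1) ^ 2 := by
    have a : ((3 * S.card : ℕ) : ℝ) ≤ (((t + 1) ^ 2 : ℕ) : ℝ) := by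
      push_cast
      have e1 : 2 * (L.card : ℝ) / q = y / 6 := by rw [hN, hy]; ring
      have e2 : (2 : ℝ) ≤ y / 6 := by
        have : 12 ≤ y := by rw [hy, le_div_iff₀ (by positivity)]; linarith
        linarith
      rw [e1] at hSc
      linarith
    exact_mod_cast a
  have hb := rich_bound p S M' (hL.mono (coe_subset.mpr hSL)) (hM.mono (coe_subset.mpr (filter_subset _ _)))
    k (fun m1 h1 m2 h2 hne => le_trans (card_le_card (filter_subset_filter _ hSL))
      (hk m1 (mem_filter.mp h1).1 m2 (mem_filter.mp h2).1 hne)) t htp hSt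
  have hsplit : (M'.filter fun m => (S.filter fun l => Inc l m).card ≤ 3 * t + k).card +
      (M'.filter fun m => 3 * t + k < (S.filter fun l => Inc l m).card).card = M'.card := by
    have := card_filter_add_card_filter_not (s := M') (fun m => (S.filter fun l => Inc l m).card ≤ 3 * t + k)
    simpa only [not_le] using this
  have hfin : M'.card ≤ 108 * t ^ 2 := by omega
  have hfin2 : (M'.card : ℝ) ≤ 108 * y := by
    have : (M'.card : ℝ) ≤ 108 * t ^ 2 := by exact_mod_cast hfin
    linarith
  -- r * y ≤ ...
  have hry : (r : ℝ) * y ≤ 1008 * (N * √N) + 384 * (k * N) := by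
    rcases min_choice ((r:ℝ)^2 / (1764 * (N:ℝ))) ((r:ℝ) / (16 * (k:ℝ))) with h | h
    · have h3 : (r:ℝ)^2 ≤ 2 * q * (1764 * N) := by
        rw [← hx] at h; rw [h, div_le_iff₀ (by positivity)] at hxq2; exact hxq2
      have h4 : (r:ℝ)^2 * y ≤ 42336 * N * N := by
        calc (r:ℝ)^2 * y ≤ 2 * q * (1764 * N) * y := by gcongr
          _ = 3528 * N * (y * q) := by ring
          _ = _ := by rw [hyq]; ring
      have h5 : (r : ℝ) * y * √N ≤ 1008 * N * √N * √N := by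
        have e1 : (r : ℝ) * y * √N * 42 ≤ r * y * r := by
          have : 0 ≤ (r : ℝ) * y := by positivity
          nlinarith
        have e2 : (1008 : ℝ) * N * √N * √N = 1008 * N * N := by rw [mul_assoc, hsq]
        rw [e2]; nlinarith
      have h6 : (r : ℝ) * y ≤ 1008 * N * √N :=
        le_of_mul_le_mul_right h5 (by apply Real.sqrt_pos.mpr; linarith)
      have : 0 ≤ (k : ℝ) * N := by positivity
      linarith
    · have h3 : (r:ℝ) ≤ 2 * q * (16 * k) := by
        rw [← hx] at h; rw [h, div_le_iff₀ (by positivity)] at hxq2; exact hxq2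
      calc (r : ℝ) * y ≤ 2 * q * (16 * k) * y := by gcongr
        _ = 32 * k * (y * q) := by ring
        _ = 384 * (k * N) := by rw [hyq]; ring
        _ ≤ _ := by
          have : 0 ≤ (N : ℝ) * √N := by positivity
          linarith
  calc (r : ℝ) * M'.card ≤ r * (108 * y) := by gcongr
    _ = 108 * (r * y) := by ring
    _ ≤ 108 * (1008 * (N * √N) + 384 * (k * N)) := by gcongr
    _ ≤ _ := by
      have : 0 ≤ (N : ℝ) * √N := by positivity
      have : 0 ≤ (k : ℝ) * N := by positivity
      linarith

lemma thmT (p : ℕ) [CharP K p] (L M : Finset (K × K × K))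
    (hL : Set.InjOn Prod.fst (L : Set (K × K × K))) (hM : Set.InjOn Prod.fst (M : Set (K × K × K)))
    (k N : ℕ) (hk1 : 1 ≤ k)
    (hk : ∀ m1 ∈ M, ∀ m2 ∈ M, m1 ≠ m2 → (L.filter fun l => Inc l m1 ∧ Inc l m2).card ≤ k)
    (hN : L.card = N) (hN2 : M.card = N) (hp : 108 * N < p ^ 2) :
    ((∑ m ∈ M, (L.filter fun l => Inc l m).card : ℕ) : ℝ)
      ≤ 110000 * (N * √N + k * N) * (1 + Real.log N) := by
  have h1 : ∀ m ∈ M, (L.filter fun l => Inc l m).card =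
      ∑ r ∈ Icc 1 N, if r ≤ (L.filter fun l => Inc l m).card then 1 else 0 := by
    intro m _
    rw [← card_filter]
    have : (Icc 1 N).filter (fun r => r ≤ (L.filter fun l => Inc l m).card) =
        Icc 1 (L.filter fun l => Inc l m).card := by
      have : (L.filter fun l => Inc l m).card ≤ N := hN ▸ card_le_card (filter_subset _ _)
      ext r; simp only [mem_filter, mem_Icc]; omega
    rw [this]; simp
  rw [sum_congr rfl h1, sum_comm]
  push_cast
  have h2 : ∀ r ∈ Icc 1 N, (∑ m ∈ M, if r ≤ (L.filter fun l => Inc l m).card then (1:ℝ) else 0) ≤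
      110000 * (N * √N + k * N) * (1 / r : ℝ) := by
    intro r hr
    have hr1 := (mem_Icc.mp hr).1
    have := rich_r p L M hL hM k N hk1 hk hN hN2 hp r hr1
    rw [← sum_filter, sum_const, nsmul_eq_mul, mul_one, mul_one_div, le_div_iff₀ (by positivity)]
    linarith
  refine (sum_le_sum h2).trans ?_
  rw [← mul_sum]
  gcongr
  have := harmonic_le_one_add_log N
  rw [harmonic_eq_sum_Icc] at this
  push_cast at this
  simpa using this

end Rud

namespace Rud
open scoped Classical

section
variable {F K : Type*} [Field F] [Field K]

noncomputable def vv (ι : F →+* K) (σ : K) (x : F × F × F) : K × K × K :=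
  ((ι x.2.1 + σ * ι x.1) / (1 + σ ^ 2 * ι x.2.2), ι x.1 / (1 + σ ^ 2 * ι x.2.2),
    ι x.2.2 / (1 + σ ^ 2 * ι x.2.2))

def Ind (ι : F →+* K) (σ : K) : Prop :=
  ∀ c0 c1 c2 c3 : F, ι c0 + ι c1 * σ + ι c2 * σ ^ 2 + ι c3 * σ ^ 3 = 0 →
    c0 = 0 ∧ c1 = 0 ∧ c2 = 0 ∧ c3 = 0

lemma vv_den (ι : F →+* K) (σ : K) (hσ : Ind ι σ) (c : F) : 1 + σ ^ 2 * ι c ≠ 0 := by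
  intro h
  have := hσ 1 0 c 0 (by simp; linear_combination h)
  exact one_ne_zero this.1

lemma vv_inj (ι : F →+* K) (σ : K) (hσ : Ind ι σ) {x y : F × F × F} (hx : x.2.1 ≠ 0) (h : (vv ι σ x).1 = (vv ι σ y).1) : x = y := by
  simp only [vv] at h
  rw [div_eq_div_iff (vv_den ι σ hσ _) (vv_den ι σ hσ _)] at h
  obtain ⟨h0, h1, h2, h3⟩ := hσ (x.2.1 - y.2.1) (x.1 - y.1) (x.2.1 * y.2.2 - y.2.1 * x.2.2)
    (x.1 * y.2.2 - y.1 * x.2.2) (by simp only [map_sub, map_mul]; linear_combination h)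
  have e0 := sub_eq_zero.mp h0
  have e1 := sub_eq_zero.mp h1
  rw [← e0, ← mul_sub] at h2
  have e2 := sub_eq_zero.mp ((mul_eq_zero.mp h2).resolve_left hx)
  exact Prod.ext e1 (Prod.ext e0 e2.symm)

lemma vv_inc (ι : F →+* K) (σ : K) (hσ : Ind ι σ) (x y : F × F × F) :
    Inc (vv ι σ x) (vv ι σ y) ↔ x.1 * y.2.1 + x.2.2 = y.1 * x.2.1 + y.2.2 := by
  have d1 := vv_den ι σ hσ x.2.2
  have d2 := vv_den ι σ hσ y.2.2
  have e1 : ι x.1 / (1 + σ ^ 2 * ι x.2.2) * ((ι y.2.1 + σ * ι y.1) / (1 + σ ^ 2 * ι y.2.2)) +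
      ι x.2.2 / (1 + σ ^ 2 * ι x.2.2) = (ι x.1 * (ι y.2.1 + σ * ι y.1) + ι x.2.2 * (1 + σ ^ 2 * ι y.2.2))
        / ((1 + σ ^ 2 * ι x.2.2) * (1 + σ ^ 2 * ι y.2.2)) := by
    field_simp
  have e2 : ι y.1 / (1 + σ ^ 2 * ι y.2.2) * ((ι x.2.1 + σ * ι x.1) / (1 + σ ^ 2 * ι x.2.2)) +
      ι y.2.2 / (1 + σ ^ 2 * ι y.2.2) = (ι y.1 * (ι x.2.1 + σ * ι x.1) + ι y.2.2 * (1 + σ ^ 2 * ι x.2.2))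
        / ((1 + σ ^ 2 * ι x.2.2) * (1 + σ ^ 2 * ι y.2.2)) := by
    field_simp
  simp only [Inc, vv]
  rw [e1, e2, div_left_inj' (mul_ne_zero d1 d2)]
  rw [← ι.injective.eq_iff]
  simp only [map_add, map_mul]
  constructor
  · intro h; linear_combination h
  · intro h; linear_combination h

lemma core_abs (ι : F →+* K) (σ : K) (hσ : Ind ι σ) (p : ℕ) [CharP K p] (A C : Finset F) (hA0 : (0:F) ∉ A) (hA : A.Nonempty)
    (hp : 108 * (A.card ^ 2 * C.card) < p ^ 2) :
    ((((A ×ˢ A ×ˢ C) ×ˢ (A ×ˢ A ×ˢ C)).filter fun z =>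
      z.1.1 * z.1.2.1 - z.1.2.2 = z.2.1 * z.2.2.1 - z.2.2.2).card : ℝ) ≤
      110000 * ((A.card ^ 2 * C.card : ℕ) * √(A.card ^ 2 * C.card : ℕ) +
        A.card * (A.card ^ 2 * C.card : ℕ)) * (1 + Real.log (A.card ^ 2 * C.card : ℕ)) := by
  set T := A ×ˢ A ×ˢ C with hT
  have hTc : T.card = A.card ^ 2 * C.card := by
    rw [hT, card_product, card_product]; ring
  have hT0 : ∀ x ∈ T, x.2.1 ≠ 0 := by
    intro x hx h0
    rw [hT, mem_product, mem_product] at hx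
    exact hA0 (h0 ▸ hx.2.1)
  have hinj : ∀ x ∈ T, ∀ y, (vv ι σ x).1 = (vv ι σ y).1 → x = y :=
    fun x hx y h => vv_inj ι σ hσ (hT0 x hx) h
  have hvi : Set.InjOn (vv ι σ) (T : Set (F × F × F)) := by
    intro x hx y _ h
    exact hinj x hx y (congrArg Prod.fst h)
  set V := T.image (vv ι σ) with hV
  have hVfst : Set.InjOn Prod.fst (V : Set (K × K × K)) := by
    intro u hu v hv h
    obtain ⟨x, hx, rfl⟩ := mem_image.mp (mem_coe.mp hu)
    obtain ⟨y, hy, rfl⟩ := mem_image.mp (mem_coe.mp hv)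
    rw [hinj x hx y h]
  have hVc : V.card = A.card ^ 2 * C.card := by rw [hV, card_image_of_injOn hvi, hTc]
  have hkey : ∀ (P : K × K × K → Prop) [DecidablePred P], (V.filter P).card = (T.filter fun x => P (vv ι σ x)).card := by
    intro P _
    rw [hV, filter_image, card_image_of_injOn (hvi.mono (coe_subset.mpr (filter_subset _ _)))]
  have hcod : ∀ m1 ∈ V, ∀ m2 ∈ V, m1 ≠ m2 → (V.filter fun l => Inc l m1 ∧ Inc l m2).card ≤ A.card := by
    intro m1 h1 m2 h2 hne
    obtain ⟨y1, hy1, rfl⟩ := mem_image.mp h1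
    obtain ⟨y2, hy2, rfl⟩ := mem_image.mp h2
    have hne' : y1 ≠ y2 := fun h => hne (by rw [h])
    rw [hkey]
    simp only [vv_inc ι σ hσ]
    by_cases hb : y1.2.1 = y2.2.1
    · by_cases ha : y1.1 = y2.1
      · have hc : y1.2.2 ≠ y2.2.2 := fun hc => hne' (Prod.ext ha (Prod.ext hb hc))
        have : (T.filter fun x => x.1 * y1.2.1 + x.2.2 = y1.1 * x.2.1 + y1.2.2 ∧
            x.1 * y2.2.1 + x.2.2 = y2.1 * x.2.1 + y2.2.2) = ∅ := by
          rw [filter_eq_empty_iff]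
          rintro x _ ⟨g1, g2⟩
          rw [ha, hb] at g1
          exact hc (by linear_combination g2 - g1)
        rw [this]; simp
      apply card_le_card_of_injOn (fun x => x.1)
      · intro x hx
        have := (mem_filter.mp hx).1
        exact (mem_product.mp this).1
      · intro x hx x' hx' h
        obtain ⟨-, g1, g2⟩ := mem_filter.mp (mem_coe.mp hx)
        obtain ⟨-, g3, g4⟩ := mem_filter.mp (mem_coe.mp hx')
        simp only at h
        have e1 : x.2.1 = x'.2.1 := by
          have : (y1.1 - y2.1) * (x.2.1 - x'.2.1) = 0 := by
            rw [h] at g1 g2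
            rw [hb] at g1 g3
            linear_combination g2 - g1 - g4 + g3
          exact sub_eq_zero.mp ((mul_eq_zero.mp this).resolve_left (sub_ne_zero.mpr ha))
        refine Prod.ext h (Prod.ext e1 ?_)
        rw [h, e1] at g1
        linear_combination g1 - g3
    · apply card_le_card_of_injOn (fun x => x.2.1)
      · intro x hx
        have := (mem_filter.mp hx).1
        exact (mem_product.mp (mem_product.mp this).2).1
      · intro x hx x' hx' h
        obtain ⟨-, g1, g2⟩ := mem_filter.mp (mem_coe.mp hx)
        obtain ⟨-, g3, g4⟩ := mem_filter.mp (mem_coe.mp hx')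
        simp only at h
        have e1 : x.1 = x'.1 := by
          have : (y1.2.1 - y2.2.1) * (x.1 - x'.1) = 0 := by
            rw [h] at g1 g2
            linear_combination g1 - g2 - g3 + g4
          exact sub_eq_zero.mp ((mul_eq_zero.mp this).resolve_left (sub_ne_zero.mpr hb))
        refine Prod.ext e1 (Prod.ext h ?_)
        rw [h, e1] at g1
        linear_combination g1 - g3
  have hmain := thmT p V V hVfst hVfst A.card (A.card ^ 2 * C.card) hA.card_pos hcod hVc hVc hp
  refine le_trans ?_ hmain
  have hsum : ∑ m ∈ V, (V.filter fun l => Inc l m).card =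
      ((T ×ˢ T).filter fun z => z.1.1 * z.2.2.1 + z.1.2.2 = z.2.1 * z.1.2.1 + z.2.2.2).card := by
    rw [hV, sum_image hvi, ← hV]
    have : ∀ x ∈ T, (V.filter fun l => Inc l (vv ι σ x)).card =
        (T.filter fun y => y.1 * x.2.1 + y.2.2 = x.1 * y.2.1 + x.2.2).card := by
      intro x _
      rw [hkey]
      simp only [vv_inc ι σ hσ]
    rw [sum_congr rfl this]
    simp only [card_filter]
    symm
    apply sum_product_right
  rw [hsum]
  norm_cast
  apply card_le_card_of_injOn (fun z => ((z.1.1, z.2.2.1, z.2.2.2), (z.2.1, z.1.2.1, z.1.2.2)))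
  · intro z hz
    simp only [hT, coe_filter, mem_product, Set.mem_setOf_eq] at hz ⊢
    obtain ⟨⟨⟨a1, a2, a3⟩, b1, b2, b3⟩, h⟩ := hz
    refine ⟨⟨⟨a1, b2, b3⟩, b1, a2, a3⟩, ?_⟩
    linear_combination h
  · rintro ⟨⟨a1, a2, a3⟩, b1, b2, b3⟩ _ ⟨⟨c1, c2, c3⟩, d1, d2, d3⟩ _ h
    simp only [Prod.mk.injEq] at h ⊢
    tauto

end

lemma core (p : ℕ) [Fact p.Prime] (A C : Finset (ZMod p)) (hA0 : (0:ZMod p) ∉ A) (hA : A.Nonempty)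
    (hp : 108 * (A.card ^ 2 * C.card) < p ^ 2) :
    ((((A ×ˢ A ×ˢ C) ×ˢ (A ×ˢ A ×ˢ C)).filter fun z =>
      z.1.1 * z.1.2.1 - z.1.2.2 = z.2.1 * z.2.2.1 - z.2.2.2).card : ℝ) ≤
      110000 * ((A.card ^ 2 * C.card : ℕ) * √(A.card ^ 2 * C.card : ℕ) +
        A.card * (A.card ^ 2 * C.card : ℕ)) * (1 + Real.log (A.card ^ 2 * C.card : ℕ)) := by
  let ι : ZMod p →+* RatFunc (ZMod p) := RatFunc.C
  haveI : CharP (RatFunc (ZMod p)) p := charP_of_injective_ringHom ι.injective p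
  have hσ : Ind ι (RatFunc.X : RatFunc (ZMod p)) := by
    intro c0 c1 c2 c3 h
    have h2 : algebraMap (Polynomial (ZMod p)) (RatFunc (ZMod p)) (Polynomial.C c0 +
      Polynomial.C c1 * Polynomial.X + Polynomial.C c2 * Polynomial.X ^ 2 +
      Polynomial.C c3 * Polynomial.X ^ 3) = 0 := by
      simpa [ι] using h
    rw [map_eq_zero_iff _ (RatFunc.algebraMap_injective (ZMod p))] at h2
    refine ⟨?_, ?_, ?_, ?_⟩
    · simpa [Polynomial.coeff_X, Polynomial.coeff_X_pow, Polynomial.coeff_C] using congrArg (fun q => Polynomial.coeff q 0) h2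
    · simpa [Polynomial.coeff_X, Polynomial.coeff_X_pow, Polynomial.coeff_C] using congrArg (fun q => Polynomial.coeff q 1) h2
    · simpa [Polynomial.coeff_X, Polynomial.coeff_X_pow, Polynomial.coeff_C] using congrArg (fun q => Polynomial.coeff q 2) h2
    · simpa [Polynomial.coeff_X, Polynomial.coeff_X_pow, Polynomial.coeff_C] using congrArg (fun q => Polynomial.coeff q 3) h2
  have := core_abs ι RatFunc.X hσ p A C hA0 hA hp
  convert this

end Rud

namespace Rud
open scoped Classical

section
variable {F : Type*} [Field F] [Fintype F]

lemma lemB (A : Finset F) (h0 : (0:F) ∉ A) (f h : F → ℝ) (hh : ∑ x, h x = 0) :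
    ∑ a ∈ A, ∑ d, (∑ c, f c * h ((c + d) / a)) ^ 2 ≤
      Fintype.card F * (∑ x, h x ^ 2) * ∑ c, f c ^ 2 := by
  set R : F → ℝ := fun b => ∑ x, h x * h (x + b) with hR
  have hR0 : R 0 = ∑ x, h x ^ 2 := by simp [hR, sq]
  have hRs : ∑ b, R b = 0 := by
    simp only [hR]
    rw [sum_comm]
    have : ∀ x, ∑ b, h x * h (x + b) = 0 := by
      intro x
      rw [← mul_sum, Fintype.sum_equiv (Equiv.addLeft x) (fun b => h (x + b)) h (fun b => rfl), hh, mul_zero]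
    simp [this]
  have e1 : ∀ a : F, a ≠ 0 → ∑ d, (∑ c, f c * h ((c + d) / a)) ^ 2 =
      ∑ c, ∑ c', f c * f c' * R ((c' - c) / a) := by
    intro a ha
    have : ∀ d, (∑ c, f c * h ((c + d) / a)) ^ 2 =
        ∑ c, ∑ c', f c * f c' * (h ((c + d) / a) * h ((c' + d) / a)) := by
      intro d
      rw [sq, sum_mul_sum]
      refine sum_congr rfl fun c _ => sum_congr rfl fun c' _ => by ring
    simp only [this]
    rw [sum_comm]
    refine sum_congr rfl fun c _ => ?_
    rw [sum_comm]
    refine sum_congr rfl fun c' _ => ?_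
    rw [← mul_sum]
    congr 1
    refine Fintype.sum_equiv ((Equiv.addLeft c).trans (Equiv.divRight₀ a ha)) _ _ ?_
    intro d
    simp only [Equiv.trans_apply, Equiv.coe_addLeft, Equiv.divRight₀_apply]
    congr 2
    field_simp
    ring
  have e2 : ∀ u : F, ∑ a ∈ univ.erase (0:F), R (u / a) =
      (if u = 0 then Fintype.card F * R 0 else 0) - R 0 := by
    intro u
    split_ifs with hu
    · subst hu
      simp only [zero_div, sum_const, nsmul_eq_mul]
      rw [card_erase_of_mem (mem_univ _), card_univ, Nat.cast_sub (Fintype.card_pos)]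
      push_cast; ring
    · have : ∑ a ∈ univ.erase (0:F), R (u / a) = ∑ b ∈ univ.erase (0:F), R b := by
        refine sum_nbij' (fun a => u / a) (fun a => u / a) ?_ ?_ ?_ ?_ ?_
        · intro a ha; simp at ha ⊢; exact ⟨hu, ha⟩
        · intro a ha; simp at ha ⊢; exact ⟨hu, ha⟩
        · intro a ha; simp at ha ⊢; field_simp
        · intro a ha; simp at ha ⊢; field_simp
        · intro a ha; rfl
      rw [this, ← add_sum_erase univ R (mem_univ 0)] at *
      rw [this]
      linarith
  calc ∑ a ∈ A, ∑ d, (∑ c, f c * h ((c + d) / a)) ^ 2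
      ≤ ∑ a ∈ univ.erase (0:F), ∑ d, (∑ c, f c * h ((c + d) / a)) ^ 2 := by
        apply sum_le_sum_of_subset_of_nonneg
        · intro a ha
          simp only [mem_erase, mem_univ, and_true]
          rintro rfl; exact h0 ha
        · intros; positivity
    _ = ∑ a ∈ univ.erase (0:F), ∑ c, ∑ c', f c * f c' * R ((c' - c) / a) :=
        sum_congr rfl fun a ha => e1 a (by simpa using ha)
    _ = ∑ c, ∑ c', f c * f c' * ((if c' - c = 0 then Fintype.card F * R 0 else 0) - R 0) := by
        rw [sum_comm]
        refine sum_congr rfl fun c _ => ?_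
        rw [sum_comm]
        refine sum_congr rfl fun c' _ => ?_
        rw [← mul_sum, e2]
    _ = Fintype.card F * R 0 * (∑ c, f c ^ 2) - R 0 * (∑ c, f c) ^ 2 := by
        simp only [mul_sub, sum_sub_distrib, sub_eq_zero, mul_ite, mul_zero, sum_ite_eq', mem_univ, if_true]
        generalize R 0 = r
        congr 1
        · rw [mul_sum]
          refine sum_congr rfl fun c _ => by ring
        · rw [sq, sum_mul_sum, mul_sum]
          refine sum_congr rfl fun c _ => ?_
          rw [mul_sum]
          refine sum_congr rfl fun c' _ => by ring
    _ ≤ _ := by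
        rw [hR0]
        have : 0 ≤ (∑ x, h x ^ 2) * (∑ c, f c) ^ 2 := by positivity
        linarith

noncomputable def gN (A : Finset F) (w : F) : ℕ := ((A ×ˢ A).filter fun x => x.1 * x.2 = w).card

lemma gN_eq (A : Finset F) (h0 : (0:F) ∉ A) (w : F) :
    (gN A w : ℝ) = ∑ a ∈ A, if w / a ∈ A then (1:ℝ) else 0 := by
  unfold gN
  rw [card_filter, sum_product]
  push_cast
  refine sum_congr rfl fun a ha => ?_
  have ha0 : a ≠ 0 := by rintro rfl; exact h0 ha
  have : ∀ b, (a * b = w) ↔ (w / a = b) := by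
    intro b
    rw [div_eq_iff ha0, mul_comm, eq_comm]
  simp only [this, sum_ite_eq]

lemma gN_le (A : Finset F) (h0 : (0:F) ∉ A) (w : F) : gN A w ≤ A.card := by
  have : (gN A w : ℝ) ≤ A.card := by
    rw [gN_eq A h0]
    calc _ ≤ ∑ a ∈ A, (1:ℝ) := sum_le_sum fun a _ => by split_ifs <;> norm_num
      _ = _ := by simp
  exact_mod_cast this

lemma gN_sum (A : Finset F) : ∑ w, gN A w = A.card ^ 2 := by
  have := card_eq_sum_card_fiberwise (s := A ×ˢ A) (t := univ) (f := fun x : F × F => x.1 * x.2)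
    (fun _ _ => by simp)
  rw [card_product] at this
  rw [sq, this]
  unfold gN
  refine sum_congr rfl fun w _ => ?_
  congr

lemma case2 (A : Finset F) (h0 : (0:F) ∉ A) (f : F → ℝ) :
    ∑ d, (∑ c, f c * ((gN A (c + d) : ℝ) - (A.card:ℝ) ^ 2 / Fintype.card F)) ^ 2 ≤
      Fintype.card F * (A.card:ℝ) ^ 2 * ∑ c, f c ^ 2 := by
  have hq : (0:ℝ) < Fintype.card F := by exact_mod_cast Fintype.card_pos
  set n : ℝ := (A.card : ℝ) with hn
  set q : ℝ := (Fintype.card F : ℝ) with hqq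
  set h : F → ℝ := fun x => (if x ∈ A then (1:ℝ) else 0) - n / q with hh
  have hs : ∑ x, h x = 0 := by
    simp only [hh, sum_sub_distrib, sum_ite_mem, univ_inter, sum_const, nsmul_eq_mul, mul_one, card_univ]
    rw [← hn, ← hqq]; field_simp; ring
  have hs2 : ∑ x, h x ^ 2 ≤ n := by
    have : ∀ x, h x ^ 2 = (if x ∈ A then (1:ℝ) else 0) - (n/q) * (if x ∈ A then (1:ℝ) else 0) - (n / q) * h x := by
      intro x; simp only [hh]; split_ifs <;> ring
    simp only [this, sum_sub_distrib]
    rw [← mul_sum, ← mul_sum, hs]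
    simp only [sum_ite_mem, univ_inter, sum_const, nsmul_eq_mul, mul_one]
    rw [← hn]
    have : 0 ≤ n / q * n := by positivity
    linarith
  have hg : ∀ d, (∑ c, f c * ((gN A (c + d) : ℝ) - n ^ 2 / q)) =
      ∑ a ∈ A, ∑ c, f c * h ((c + d) / a) := by
    intro d
    rw [sum_comm]
    refine sum_congr rfl fun c _ => ?_
    rw [← mul_sum, gN_eq A h0]
    simp only [hh, sum_sub_distrib, sum_const, nsmul_eq_mul]
    rw [← hn]; ring
  simp only [hg]
  calc _ ≤ ∑ d, n * ∑ a ∈ A, (∑ c, f c * h ((c + d) / a)) ^ 2 :=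
        sum_le_sum fun d _ => sq_sum_le_card_mul_sum_sq
    _ = n * ∑ a ∈ A, ∑ d, (∑ c, f c * h ((c + d) / a)) ^ 2 := by rw [← mul_sum, sum_comm]
    _ ≤ n * (q * (∑ x, h x ^ 2) * ∑ c, f c ^ 2) := by
        apply mul_le_mul_of_nonneg_left (lemB A h0 f h hs); positivity
    _ ≤ n * (q * n * ∑ c, f c ^ 2) := by gcongr
    _ = _ := by ring

lemma sq_count {α β : Type*} [Fintype β] (T : Finset α) (φ : α → β) :
    ∑ d, (T.filter fun x => φ x = d).card ^ 2 = ((T ×ˢ T).filter fun z => φ z.1 = φ z.2).card := by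
  have : ∀ d, (T.filter fun x => φ x = d).card ^ 2 =
      (((T ×ˢ T).filter fun z => φ z.1 = φ z.2).filter fun z => φ z.1 = d).card := by
    intro d
    rw [sq, ← card_product]
    congr 1
    ext ⟨x, y⟩
    simp only [mem_product, mem_filter]
    constructor
    · rintro ⟨⟨a, b⟩, c, e⟩; exact ⟨⟨⟨a, c⟩, b.trans e.symm⟩, b⟩
    · rintro ⟨⟨⟨a, c⟩, e⟩, b⟩; exact ⟨⟨a, b⟩, c, e ▸ b⟩
  simp only [this]
  have := card_eq_sum_card_fiberwise (s := (T ×ˢ T).filter fun z => φ z.1 = φ z.2) (t := univ) (f := fun z : α × α => φ z.1)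
    (fun _ _ => by simp)
  rw [this]

lemma case1_var (A C : Finset F) (B : ℝ) (hB : ∀ c ∈ C, (gN A c : ℝ) ≤ B) :
    ∑ d, (∑ c ∈ C, (gN A c : ℝ) * ((gN A (c + d) : ℝ) - (A.card:ℝ) ^ 2 / Fintype.card F)) ^ 2 ≤
      B ^ 2 * (((A ×ˢ A ×ˢ C) ×ˢ (A ×ˢ A ×ˢ C)).filter fun z =>
      z.1.1 * z.1.2.1 - z.1.2.2 = z.2.1 * z.2.2.1 - z.2.2.2).card := by
  have hq : (0:ℝ) < Fintype.card F := by exact_mod_cast Fintype.card_pos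
  set q : ℝ := (Fintype.card F : ℝ) with hqq
  set H : F → ℝ := fun d => ∑ c ∈ C, (gN A c : ℝ) * gN A (c + d) with hH
  set m : ℝ := ∑ c ∈ C, (gN A c : ℝ) * ((A.card:ℝ) ^ 2 / q) with hm
  have e1 : ∀ d, ∑ c ∈ C, (gN A c : ℝ) * ((gN A (c + d) : ℝ) - (A.card:ℝ) ^ 2 / q) = H d - m := by
    intro d
    simp only [hH, hm, mul_sub, sum_sub_distrib]
  have e2 : ∑ d, H d = q * m := by
    simp only [hH, hm]
    rw [sum_comm, mul_sum]
    refine sum_congr rfl fun c _ => ?_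
    rw [← mul_sum, Fintype.sum_equiv (Equiv.addLeft c) (fun b => (gN A (c + b):ℝ)) (fun b => (gN A b : ℝ)) (fun b => rfl)]
    have := gN_sum A
    rw [← Nat.cast_sum, this]
    push_cast; field_simp
  simp only [e1]
  have e3 : ∑ d, (H d - m) ^ 2 = ∑ d, H d ^ 2 - q * m ^ 2 := by
    have : ∀ d, (H d - m) ^ 2 = H d ^ 2 - (2 * m) * H d + m ^ 2 := fun d => by ring
    simp only [this, sum_add_distrib, sum_sub_distrib]
    rw [← mul_sum, e2, sum_const, card_univ, nsmul_eq_mul, ← hqq]; ring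
  have e4 : ∀ d, ∑ c ∈ C, (gN A (c + d)) = ((A ×ˢ A ×ˢ C).filter fun x => x.1 * x.2.1 - x.2.2 = d).card := by
    intro d
    have : ((A ×ˢ A ×ˢ C).filter fun x => x.1 * x.2.1 - x.2.2 = d).card =
      (((A ×ˢ A) ×ˢ C).filter fun x => x.1.1 * x.1.2 - x.2 = d).card := by
      apply card_nbij' (fun x => ((x.1, x.2.1), x.2.2)) (fun x => (x.1.1, x.1.2, x.2)) <;>
      · intro x hx
        simp only [coe_filter, mem_filter, mem_product, Set.mem_ofPred_eq] at hx ⊢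
        try tauto
    rw [this, card_filter, sum_product_right]
    refine sum_congr rfl fun c _ => ?_
    rw [gN, card_filter]
    refine sum_congr rfl fun x _ => ?_
    congr 1
    rw [eq_iff_iff, sub_eq_iff_eq_add, add_comm]
  have e5 := sq_count (A ×ˢ A ×ˢ C) (fun x : F × F × F => x.1 * x.2.1 - x.2.2)
  have hm2 : 0 ≤ q * m ^ 2 := by positivity
  rw [← e5]
  push_cast
  rw [mul_sum, e3]
  refine (sub_le_self _ hm2).trans (sum_le_sum fun d _ => ?_)
  rw [← mul_pow]
  have e6 : 0 ≤ H d := sum_nonneg fun c _ => by positivity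
  apply pow_le_pow_left₀ e6
  rw [← e4]
  push_cast
  rw [mul_sum]
  exact sum_le_sum fun c hc => mul_le_mul_of_nonneg_right (hB c hc) (by positivity)

end
end Rud

namespace Rud
open scoped Classical

lemma level (p : ℕ) [Fact p.Prime] (A C : Finset (ZMod p)) (hA0 : (0:ZMod p) ∉ A) (hA : A.Nonempty)
    (j E : ℕ) (hC : ∀ c ∈ C, 2 ^ j ≤ gN A c ∧ gN A c < 2 ^ (j + 1)) (hE : 4 ^ j * C.card ≤ E) :
    ∑ d, (∑ c ∈ C, (gN A c : ℝ) * ((gN A (c + d) : ℝ) - (A.card:ℝ) ^ 2 / p)) ^ 2 ≤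
      880000 * (A.card:ℝ) ^ 3 * (2 ^ j * C.card) * √E * (1 + 4 * Real.log A.card) := by
  have hn1 : (1:ℝ) ≤ A.card := by exact_mod_cast hA.card_pos
  have hlog : 0 ≤ Real.log A.card := Real.log_nonneg hn1
  rcases C.eq_empty_or_nonempty with rfl | hCn
  · simp
  have hc1 : 1 ≤ C.card := hCn.card_pos
  have hcR : (1:ℝ) ≤ C.card := by exact_mod_cast hc1
  have hB : ∀ c ∈ C, (gN A c : ℝ) ≤ 2 ^ (j + 1) := fun c hc => by exact_mod_cast (hC c hc).2.le
  have hcn : C.card ≤ A.card ^ 2 := by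
    rw [← gN_sum A]
    calc C.card = ∑ c ∈ C, 1 := by simp
      _ ≤ ∑ c ∈ C, gN A c := sum_le_sum fun c hc => Nat.one_le_two_pow.trans (hC c hc).1
      _ ≤ _ := sum_le_sum_of_subset (subset_univ _)
  have hER : (2 ^ j : ℝ) ^ 2 * C.card ≤ E := by
    have : ((4 ^ j * C.card : ℕ) : ℝ) ≤ E := by exact_mod_cast hE
    push_cast at this
    rw [← pow_mul, mul_comm j 2, pow_mul]; norm_num; exact this
  set n : ℝ := (A.card : ℝ) with hn
  set t : ℝ := (2:ℝ) ^ j with ht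
  have ht0 : 0 < t := by positivity
  set s : ℝ := √(C.card : ℝ) with hs
  have hs2 : s ^ 2 = C.card := Real.sq_sqrt (by positivity)
  have hs0 : 0 ≤ s := Real.sqrt_nonneg _
  have hts : t * s ≤ √E := by
    apply Real.le_sqrt_of_sq_le
    rw [mul_pow, hs2]; exact hER
  have hte : t ≤ √E := by
    refine le_trans ?_ hts
    have : 1 ≤ s := by rw [hs]; exact Real.one_le_sqrt.mpr hcR
    nlinarith
  have hsE : 0 ≤ √(E:ℝ) := Real.sqrt_nonneg _
  by_cases hp : 108 * (A.card ^ 2 * C.card) < p ^ 2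
  · have h1 := case1_var A C (2 ^ (j+1)) hB
    rw [ZMod.card] at h1
    have h2 := core p A C hA0 hA hp
    refine h1.trans ?_
    have hN : ((A.card ^ 2 * C.card : ℕ) : ℝ) = (n * s) ^ 2 := by
      push_cast; rw [mul_pow, hs2]
    have hsq : √((A.card ^ 2 * C.card : ℕ) : ℝ) = n * s := by
      rw [hN]; exact Real.sqrt_sq (by positivity)
    have hl : Real.log ((A.card ^ 2 * C.card : ℕ) : ℝ) ≤ 4 * Real.log n := by
      rw [show 4 * Real.log n = Real.log (n ^ 4) by rw [Real.log_pow]; norm_num]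
      apply Real.log_le_log
      · have : 0 < A.card := hA.card_pos
        exact_mod_cast Nat.mul_pos (by positivity) hc1
      · have : A.card ^ 2 * C.card ≤ A.card ^ 4 := by nlinarith
        rw [hn]; exact_mod_cast this
    rw [hsq, hN] at h2
    rw [hN] at hl
    have h3 : (2 ^ (j+1) : ℝ) ^ 2 * (110000 * ((n*s)^2 * (n * s) + n * (n*s)^2) * (1 + Real.log ((n*s)^2)))
        ≤ 880000 * n ^ 3 * (t * s ^ 2) * √E * (1 + 4 * Real.log n) := by
      have e : (2 ^ (j+1) : ℝ) ^ 2 * (110000 * ((n*s)^2 * (n * s) + n * (n*s)^2) * (1 + Real.log ((n*s)^2)))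
        = (440000 * n ^ 3 * (t * s ^ 2)) * (t * s + t) * (1 + Real.log ((n*s)^2)) := by
        rw [pow_succ (2:ℝ) j, ← ht]; ring
      rw [e]
      calc _ ≤ (440000 * n ^ 3 * (t * s ^ 2)) * (t * s + t) * (1 + 4 * Real.log n) := by gcongr
        _ ≤ (440000 * n ^ 3 * (t * s ^ 2)) * (√E + √E) * (1 + 4 * Real.log n) := by gcongr
        _ = _ := by ring
    rw [← hs2]
    refine le_trans ?_ h3
    apply mul_le_mul_of_nonneg_left _ (by positivity)
    refine le_trans (le_of_eq ?_) h2
    congr!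
  · have hpR : (p:ℝ) ≤ 11 * (n * s) := by
      have : ((p ^ 2 : ℕ) : ℝ) ≤ (108 * (A.card ^ 2 * C.card) : ℕ) := by exact_mod_cast not_lt.mp hp
      push_cast at this
      rw [← hs2] at this
      apply (pow_le_pow_iff_left₀ (by positivity) (by positivity) two_ne_zero).mp
      nlinarith [sq_nonneg (n*s)]
    have h1 := case2 A hA0 (fun c => if c ∈ C then (gN A c : ℝ) else 0)
    simp only [ite_mul, zero_mul, ite_pow, sum_ite_mem, univ_inter, ZMod.card, ne_eq, OfNat.ofNat_ne_zero, not_false_eq_true, zero_pow] at h1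
    refine h1.trans ?_
    have h2 : ∑ c ∈ C, (gN A c : ℝ) ^ 2 ≤ 4 * t ^ 2 * s ^ 2 := by
      calc _ ≤ ∑ c ∈ C, ((2:ℝ) ^ (j + 1)) ^ 2 := sum_le_sum fun c hc => pow_le_pow_left₀ (by positivity) (hB c hc) 2
        _ = _ := by rw [sum_const, nsmul_eq_mul, hs2, pow_succ (2:ℝ) j, ← ht]; ring
    rw [← hs2]
    calc _ ≤ (11 * (n * s)) * n ^ 2 * (4 * t ^ 2 * s ^ 2) := by gcongr
      _ = 44 * n ^ 3 * (t * s ^ 2) * (t * s) := by ring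
      _ ≤ 44 * n ^ 3 * (t * s ^ 2) * √E := by gcongr
      _ = 44 * n ^ 3 * (t * s ^ 2) * √E * 1 := by ring
      _ ≤ 880000 * n ^ 3 * (t * s ^ 2) * √E * (1 + 4 * Real.log n) := by
        gcongr
        · norm_num
        · linarith

end Rud

namespace Rud
open scoped Classical

lemma push_sum {α β : Type*} [Fintype β] (T : Finset α) (f : α → β) (φ : β → ℝ) :
    ∑ x ∈ T, φ (f x) = ∑ c, ((T.filter fun x => f x = c).card : ℝ) * φ c := by
  have : ∀ c, ((T.filter fun x => f x = c).card : ℝ) * φ c = ∑ x ∈ T, if f x = c then φ c else 0 := by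
    intro c
    rw [← sum_filter, sum_const, nsmul_eq_mul]
  simp only [this]
  rw [sum_comm]
  refine sum_congr rfl fun x _ => ?_
  simp

noncomputable def rN {F : Type*} [Field F] (A : Finset F) (d : F) : ℕ :=
  ((A ×ˢ A).filter fun x => x.1 - x.2 = d).card

lemma rN_sum {F : Type*} [Field F] [Fintype F] (A : Finset F) : ∑ w, (rN A w : ℝ) = (A.card:ℝ) ^ 2 := by
  have := push_sum (A ×ˢ A) (fun x : F × F => x.1 - x.2) (fun _ => 1)
  simp only [sum_const, card_product, nsmul_eq_mul, mul_one] at this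
  unfold rN
  rw [← this]; push_cast; ring

lemma rN_sq (p : ℕ) [Fact p.Prime] (A : Finset (ZMod p)) :
    ∑ d, (rN A d : ℝ) ^ 2 ≤ addEnergy p A := by
  have h := sq_count (A ×ˢ A) (fun x : ZMod p × ZMod p => x.1 - x.2)
  have : ∑ d, (rN A d) ^ 2 ≤ addEnergy p A := by
    unfold rN
    rw [h]
    unfold _root_.addEnergy
    apply card_le_card_of_injOn (fun z => ((z.1.1, z.2.2), (z.2.1, z.1.2)))
    · intro z hz
      simp only [coe_filter, mem_product, Set.mem_ofPred_eq] at hz ⊢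
      obtain ⟨⟨⟨a1, a2⟩, b1, b2⟩, h⟩ := hz
      refine ⟨⟨⟨a1, b2⟩, b1, a2⟩, ?_⟩
      linear_combination h
    · rintro ⟨⟨a1, a2⟩, b1, b2⟩ _ ⟨⟨c1, c2⟩, d1, d2⟩ _ h
      simp only [Prod.mk.injEq] at h ⊢
      tauto
  exact_mod_cast this

lemma gN_sq (p : ℕ) [Fact p.Prime] (A : Finset (ZMod p)) :
    ∑ d, (gN A d) ^ 2 = mulEnergy p A := by
  have h := sq_count (A ×ˢ A) (fun x : ZMod p × ZMod p => x.1 * x.2)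
  unfold gN
  rw [h]
  unfold _root_.mulEnergy
  congr!

lemma Nprime_eq (p : ℕ) [Fact p.Prime] (A : Finset (ZMod p)) :
    (Nprime p A : ℝ) = ∑ d, (rN A d : ℝ) * ∑ c, (gN A c : ℝ) * gN A (c + d) := by
  have h1 : Nprime p A = ((((A ×ˢ A) ×ˢ (A ×ˢ A)) ×ˢ (A ×ˢ A)).filter fun z =>
      z.2.1 * z.2.2 = z.1.2.1 * z.1.2.2 + (z.1.1.1 - z.1.1.2)).card := by
    unfold Nprime
    apply card_nbij' (fun z => (((z.1.2.2, z.2.2.2), (z.1.1, z.1.2.1)), (z.2.1, z.2.2.1)))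
      (fun z => ((z.1.2.1, z.1.2.2, z.1.1.1), (z.2.1, z.2.2, z.1.1.2)))
    · intro z hz
      simp only [coe_filter, mem_product, Set.mem_ofPred_eq] at hz ⊢
      refine ⟨by tauto, by linear_combination -hz.2⟩
    · intro z hz
      simp only [coe_filter, mem_product, Set.mem_ofPred_eq] at hz ⊢
      refine ⟨by tauto, by linear_combination -hz.2⟩
    · intro z _; rfl
    · intro z _; rfl
  rw [h1, card_filter, sum_product, sum_product]
  have h2 := push_sum (A ×ˢ A) (fun x : ZMod p × ZMod p => x.1 - x.2) (fun d => ∑ c, (gN A c : ℝ) * gN A (c + d))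
  unfold rN
  rw [← h2]
  push_cast
  refine sum_congr rfl fun y _ => ?_
  have h3 := push_sum (A ×ˢ A) (fun x : ZMod p × ZMod p => x.1 * x.2) (fun c => (gN A (c + (y.1 - y.2)) : ℝ))
  have h4 : ∀ c, (gN A c : ℝ) = (((A ×ˢ A).filter fun x => x.1 * x.2 = c).card : ℝ) := by
    intro c; unfold gN; congr!
  refine Eq.trans ?_ (h3.trans ?_)
  · refine sum_congr rfl fun x _ => ?_
    rw [h4, card_filter]; push_cast; rfl
  · refine sum_congr rfl fun c _ => ?_
    rw [h4 c]; congr!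

lemma fin_arith (n ℓ Λ L E P S Q : ℝ) (hn : 0 ≤ n) (hℓ0 : 0 ≤ ℓ) (hE : 0 ≤ E) (hQ : 0 ≤ Q)
    (hΛb : Λ ≤ 4 * ℓ) (hLb : L ≤ ℓ) (hsw : S ≤ √L * n) (hS : 0 ≤ S) (hP : P = √√E) :
    Q * (√(880000 * n ^ 3 * √E * Λ) * S) ≤ 2000 * (n ^ 2 * √n) * Q * P * ℓ := by
  subst hP
  have h1 : √(880000 * n ^ 3 * √E * Λ) ≤ 2000 * (n * √n) * √√E * √ℓ := by
    apply Real.sqrt_le_iff.mpr ⟨by positivity, ?_⟩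
    have e : (2000 * (n * √n) * √√E * √ℓ) ^ 2 = 4000000 * n ^ 2 * (√n) ^ 2 * (√√E) ^ 2 * (√ℓ) ^ 2 := by ring
    rw [e, Real.sq_sqrt hn, Real.sq_sqrt (Real.sqrt_nonneg _), Real.sq_sqrt hℓ0]
    have h0 : 0 ≤ n ^ 3 * √E := by positivity
    have h1 : (n ^ 3 * √E) * Λ ≤ (n ^ 3 * √E) * (4 * ℓ) := mul_le_mul_of_nonneg_left hΛb h0
    have : 0 ≤ n ^ 3 * √E * ℓ := by positivity
    nlinarith
  have h2 : S ≤ √ℓ * n := hsw.trans (mul_le_mul_of_nonneg_right (Real.sqrt_le_sqrt hLb) hn)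
  calc _ ≤ Q * ((2000 * (n * √n) * √√E * √ℓ) * (√ℓ * n)) := by
        apply mul_le_mul_of_nonneg_left _ hQ
        exact mul_le_mul h1 h2 hS (by positivity)
    _ = 2000 * (n ^ 2 * √n) * Q * √√E * (√ℓ * √ℓ) := by ring
    _ = _ := by rw [Real.mul_self_sqrt hℓ0]

lemma main0 (p : ℕ) [Fact p.Prime] (A : Finset (ZMod p)) (hA0 : (0:ZMod p) ∉ A) (hA : A.Nonempty) :
    (Nprime p A : ℝ) - (A.card:ℝ) ^ 6 / p ≤
      2000 * ((A.card:ℝ) ^ 2 * √A.card) * √(addEnergy p A) * √√(mulEnergy p A) *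
        (Real.logb 2 A.card + 1) := by
  have hn1 : (1:ℝ) ≤ A.card := by exact_mod_cast hA.card_pos
  have hlog : 0 ≤ Real.log A.card := Real.log_nonneg hn1
  have hlogb : 0 ≤ Real.logb 2 A.card := Real.logb_nonneg (by norm_num) hn1
  have hp0 : (0:ℝ) < p := by exact_mod_cast (Fact.out : p.Prime).pos
  set n : ℝ := (A.card : ℝ) with hn
  set E := mulEnergy p A with hE
  set L := Nat.log 2 A.card + 1 with hL
  set C : ℕ → Finset (ZMod p) := fun j => univ.filter fun c => gN A c ≠ 0 ∧ Nat.log 2 (gN A c) = j with hC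
  have hCm : ∀ j, ∀ c ∈ C j, 2 ^ j ≤ gN A c ∧ gN A c < 2 ^ (j + 1) := by
    intro j c hc
    simp only [hC, mem_filter, mem_univ, true_and] at hc
    obtain ⟨h1, rfl⟩ := hc
    exact ⟨Nat.pow_log_le_self 2 h1, Nat.lt_pow_succ_log_self (by norm_num) _⟩
  have hpart : ∀ φ : ZMod p → ℝ, ∑ c, (gN A c : ℝ) * φ c = ∑ j ∈ range L, ∑ c ∈ C j, (gN A c : ℝ) * φ c := by
    intro φ
    have h1 : ∑ c, (gN A c : ℝ) * φ c = ∑ c ∈ univ.filter (fun c => gN A c ≠ 0), (gN A c : ℝ) * φ c := by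
      symm
      apply sum_subset (filter_subset _ _)
      intro c _ hc
      simp at hc
      simp [hc]
    rw [h1, ← sum_fiberwise_of_maps_to (t := range L) (g := fun c => Nat.log 2 (gN A c))]
    · refine sum_congr rfl fun j _ => ?_
      rw [filter_filter]
    · intro c _
      rw [mem_range, hL, Nat.lt_succ_iff]
      exact Nat.log_mono_right (gN_le A hA0 c)
  set G : ℕ → ZMod p → ℝ := fun j d => ∑ c ∈ C j, (gN A c : ℝ) * ((gN A (c + d) : ℝ) - n ^ 2 / p) with hG
  have hgs : ∑ c, (gN A c : ℝ) = n ^ 2 := by rw [← Nat.cast_sum, gN_sum]; push_cast; rfl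
  -- decomposition
  have hdec : (Nprime p A : ℝ) - n ^ 6 / p = ∑ j ∈ range L, ∑ d, (rN A d : ℝ) * G j d := by
    rw [sum_comm, Nprime_eq]
    have e1 : n ^ 6 / p = ∑ d, (rN A d : ℝ) * (n ^ 4 / p) := by
      rw [← sum_mul, rN_sum]; ring
    rw [e1, ← sum_sub_distrib]
    refine sum_congr rfl fun d _ => ?_
    rw [← mul_sub, ← mul_sum]
    congr 1
    simp only [hG]
    rw [← hpart (fun c => (gN A (c + d) : ℝ) - n ^ 2 / p)]
    simp only [mul_sub, sum_sub_distrib]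
    rw [← sum_mul, hgs]; ring
  have hw : ∀ j, 4 ^ j * (C j).card ≤ E := by
    intro j
    rw [hE, ← gN_sq]
    calc 4 ^ j * (C j).card = ∑ c ∈ C j, (2 ^ j) ^ 2 := by
          rw [sum_const, smul_eq_mul, ← pow_mul, mul_comm j 2, pow_mul]; norm_num [mul_comm]
      _ ≤ ∑ c ∈ C j, gN A c ^ 2 := sum_le_sum fun c hc => Nat.pow_le_pow_left (hCm j c hc).1 2
      _ ≤ _ := sum_le_sum_of_subset (subset_univ _)
  set w : ℕ → ℝ := fun j => 2 ^ j * (C j).card with hwd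
  have hw0 : ∀ j, 0 ≤ w j := fun j => by positivity
  have hws : ∑ j ∈ range L, w j ≤ n ^ 2 := by
    rw [← hgs]
    have := hpart (fun _ => 1)
    simp only [mul_one] at this
    rw [this]
    refine sum_le_sum fun j _ => ?_
    calc w j = ∑ c ∈ C j, (2:ℝ) ^ j := by rw [sum_const, nsmul_eq_mul, mul_comm]
      _ ≤ _ := sum_le_sum fun c hc => by exact_mod_cast (hCm j c hc).1
  set Λ : ℝ := 1 + 4 * Real.log n with hΛ
  have hΛ0 : 0 ≤ Λ := by positivity
  have hlev : ∀ j, ∑ d, G j d ^ 2 ≤ (880000 * n ^ 3 * √E * Λ) * w j := by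
    intro j
    have := level p A (C j) hA0 hA j E (hCm j) (hw j)
    refine this.trans (le_of_eq ?_)
    simp only [hwd, hΛ]; ring
  have hCS : ∀ j, ∑ d, (rN A d : ℝ) * G j d ≤ √(addEnergy p A) * (√(880000 * n ^ 3 * √E * Λ) * √(w j)) := by
    intro j
    have h1 := Real.sum_mul_le_sqrt_mul_sqrt univ (fun d => (rN A d : ℝ)) (G j)
    refine h1.trans ?_
    rw [← Real.sqrt_mul (x := 880000 * n ^ 3 * √E * Λ) (by positivity)]
    exact mul_le_mul (Real.sqrt_le_sqrt (rN_sq p A)) (Real.sqrt_le_sqrt (hlev j)) (Real.sqrt_nonneg _) (Real.sqrt_nonneg _)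
  have hsw : ∑ j ∈ range L, √(w j) ≤ √L * n := by
    have h1 := Real.sum_mul_le_sqrt_mul_sqrt (range L) (fun _ => 1) (fun j => √(w j))
    simp only [one_mul, one_pow, sum_const, card_range, nsmul_eq_mul, mul_one] at h1
    refine h1.trans ?_
    gcongr
    apply Real.sqrt_le_iff.mpr ⟨by positivity, ?_⟩
    refine le_trans (le_of_eq (sum_congr rfl fun j _ => Real.sq_sqrt (hw0 j))) hws
  have hLb : (L:ℝ) ≤ Real.logb 2 n + 1 := by
    rw [hL]; push_cast
    have := Real.natLog_le_logb A.card 2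
    push_cast at this
    linarith
  have hΛb : Λ ≤ 4 * (Real.logb 2 n + 1) := by
    have : Real.log n ≤ Real.logb 2 n := by
      rw [Real.logb, le_div_iff₀ (Real.log_pos (by norm_num))]
      have : Real.log 2 ≤ 1 := by have := Real.log_two_lt_d9; linarith
      nlinarith
    rw [hΛ]; linarith
  rw [hdec]
  have hfin : ∑ j ∈ range L, ∑ d, (rN A d : ℝ) * G j d ≤
      √(addEnergy p A) * (√(880000 * n ^ 3 * √E * Λ) * ∑ j ∈ range L, √(w j)) := by
    rw [mul_sum, mul_sum]
    exact sum_le_sum fun j _ => hCS j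
  exact hfin.trans (fin_arith n (Real.logb 2 n + 1) Λ L E _ _ _ (by linarith) (by linarith) (Nat.cast_nonneg _)
    (Real.sqrt_nonneg _) hΛb hLb hsw (sum_nonneg fun j _ => Real.sqrt_nonneg _) rfl)

end Rud

namespace Rud
open scoped Classical

lemma zero_rem (p : ℕ) [Fact p.Prime] (A : Finset (ZMod p)) :
    Nprime p A ≤ Nprime p (A.erase 0) + 6 * A.card ^ 4 := by
  set S := ((A ×ˢ A ×ˢ A) ×ˢ (A ×ˢ A ×ˢ A)).filter fun x =>
    x.1.1 * x.1.2.1 + x.1.2.2 = x.2.1 * x.2.2.1 + x.2.2.2 with hS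
  set S' := ((A.erase 0 ×ˢ A.erase 0 ×ˢ A.erase 0) ×ˢ (A.erase 0 ×ˢ A.erase 0 ×ˢ A.erase 0)).filter fun x =>
    x.1.1 * x.1.2.1 + x.1.2.2 = x.2.1 * x.2.2.1 + x.2.2.2 with hS'
  have hc4 : (A ×ˢ A ×ˢ A ×ˢ A).card = A.card ^ 4 := by simp only [card_product]; ring
  have key : ∀ (P : (ZMod p × ZMod p × ZMod p) × (ZMod p × ZMod p × ZMod p) → Prop)
      (f : (ZMod p × ZMod p × ZMod p) × (ZMod p × ZMod p × ZMod p) → ZMod p × ZMod p × ZMod p × ZMod p),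
      (∀ z ∈ S, f z ∈ A ×ˢ A ×ˢ A ×ˢ A) → (∀ z ∈ S, ∀ z' ∈ S, P z → P z' → f z = f z' → z = z') →
      (S.filter P).card ≤ A.card ^ 4 := by
    intro P f h1 h2
    rw [← hc4]
    apply card_le_card_of_injOn f
    · intro z hz
      exact h1 z (mem_filter.mp (mem_coe.mp hz)).1
    · intro z hz z' hz' h
      obtain ⟨a, b⟩ := mem_filter.mp (mem_coe.mp hz)
      obtain ⟨a', b'⟩ := mem_filter.mp (mem_coe.mp hz')
      exact h2 z a z' a' b b' h
  have mem : ∀ z ∈ S, (z.1.1 ∈ A ∧ z.1.2.1 ∈ A ∧ z.1.2.2 ∈ A) ∧ (z.2.1 ∈ A ∧ z.2.2.1 ∈ A ∧ z.2.2.2 ∈ A) := by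
    intro z hz
    have := (mem_filter.mp hz).1
    simpa only [mem_product] using this
  have meq : ∀ z ∈ S, z.1.1 * z.1.2.1 + z.1.2.2 = z.2.1 * z.2.2.1 + z.2.2.2 :=
    fun z hz => (mem_filter.mp hz).2
  have k1 := key (fun z => z.1.1 = 0) (fun z => (z.1.2.1, z.1.2.2, z.2.1, z.2.2.1))
    (by intro z hz; have := mem z hz; simp only [mem_product]; tauto)
    (by
      rintro ⟨⟨a, b, c⟩, d, e, f⟩ h ⟨⟨a', b', c'⟩, d', e', f'⟩ h' q q' g
      have m1 := meq _ h
      have m2 := meq _ h'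
      simp only [Prod.mk.injEq] at *
      obtain ⟨rfl, rfl, rfl, rfl⟩ := g
      subst q; subst q'
      refine ⟨by tauto, rfl, rfl, by linear_combination m2 - m1⟩)
  have k2 := key (fun z => z.1.2.1 = 0) (fun z => (z.1.1, z.1.2.2, z.2.1, z.2.2.1))
    (by intro z hz; have := mem z hz; simp only [mem_product]; tauto)
    (by
      rintro ⟨⟨a, b, c⟩, d, e, f⟩ h ⟨⟨a', b', c'⟩, d', e', f'⟩ h' q q' g
      have m1 := meq _ h
      have m2 := meq _ h'
      simp only [Prod.mk.injEq] at *
      obtain ⟨rfl, rfl, rfl, rfl⟩ := g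
      subst q; subst q'
      refine ⟨by tauto, rfl, rfl, by linear_combination m2 - m1⟩)
  have k3 := key (fun z => z.1.2.2 = 0) (fun z => (z.1.1, z.1.2.1, z.2.1, z.2.2.1))
    (by intro z hz; have := mem z hz; simp only [mem_product]; tauto)
    (by
      rintro ⟨⟨a, b, c⟩, d, e, f⟩ h ⟨⟨a', b', c'⟩, d', e', f'⟩ h' q q' g
      have m1 := meq _ h
      have m2 := meq _ h'
      simp only [Prod.mk.injEq] at *
      obtain ⟨rfl, rfl, rfl, rfl⟩ := g
      subst q; subst q'
      refine ⟨by tauto, rfl, rfl, by linear_combination m2 - m1⟩)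
  have k4 := key (fun z => z.2.1 = 0) (fun z => (z.2.2.1, z.2.2.2, z.1.1, z.1.2.1))
    (by intro z hz; have := mem z hz; simp only [mem_product]; tauto)
    (by
      rintro ⟨⟨a, b, c⟩, d, e, f⟩ h ⟨⟨a', b', c'⟩, d', e', f'⟩ h' q q' g
      have m1 := meq _ h
      have m2 := meq _ h'
      simp only [Prod.mk.injEq] at *
      obtain ⟨rfl, rfl, rfl, rfl⟩ := g
      subst q; subst q'
      refine ⟨⟨rfl, rfl, by linear_combination m1 - m2⟩, by tauto⟩)
  have k5 := key (fun z => z.2.2.1 = 0) (fun z => (z.2.1, z.2.2.2, z.1.1, z.1.2.1))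
    (by intro z hz; have := mem z hz; simp only [mem_product]; tauto)
    (by
      rintro ⟨⟨a, b, c⟩, d, e, f⟩ h ⟨⟨a', b', c'⟩, d', e', f'⟩ h' q q' g
      have m1 := meq _ h
      have m2 := meq _ h'
      simp only [Prod.mk.injEq] at *
      obtain ⟨rfl, rfl, rfl, rfl⟩ := g
      subst q; subst q'
      refine ⟨⟨rfl, rfl, by linear_combination m1 - m2⟩, by tauto⟩)
  have k6 := key (fun z => z.2.2.2 = 0) (fun z => (z.2.1, z.2.2.1, z.1.1, z.1.2.1))
    (by intro z hz; have := mem z hz; simp only [mem_product]; tauto)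
    (by
      rintro ⟨⟨a, b, c⟩, d, e, f⟩ h ⟨⟨a', b', c'⟩, d', e', f'⟩ h' q q' g
      have m1 := meq _ h
      have m2 := meq _ h'
      simp only [Prod.mk.injEq] at *
      obtain ⟨rfl, rfl, rfl, rfl⟩ := g
      subst q; subst q'
      refine ⟨⟨rfl, rfl, by linear_combination m1 - m2⟩, by tauto⟩)
  have hsub : S ⊆ S' ∪ (S.filter (fun z => z.1.1 = 0) ∪ (S.filter (fun z => z.1.2.1 = 0) ∪
      (S.filter (fun z => z.1.2.2 = 0) ∪ (S.filter (fun z => z.2.1 = 0) ∪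
      (S.filter (fun z => z.2.2.1 = 0) ∪ S.filter (fun z => z.2.2.2 = 0)))))) := by
    intro z hz
    have m := mem z hz
    have e := meq z hz
    simp only [mem_union, mem_filter, hS', mem_product, mem_erase, hz, true_and, e, and_true]
    tauto
  have h1 := card_le_card hsub
  have u1 := card_union_le S' (S.filter (fun z => z.1.1 = 0) ∪ (S.filter (fun z => z.1.2.1 = 0) ∪
      (S.filter (fun z => z.1.2.2 = 0) ∪ (S.filter (fun z => z.2.1 = 0) ∪
      (S.filter (fun z => z.2.2.1 = 0) ∪ S.filter (fun z => z.2.2.2 = 0))))))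
  have u2 := card_union_le (S.filter (fun z => z.1.1 = 0)) (S.filter (fun z => z.1.2.1 = 0) ∪
      (S.filter (fun z => z.1.2.2 = 0) ∪ (S.filter (fun z => z.2.1 = 0) ∪
      (S.filter (fun z => z.2.2.1 = 0) ∪ S.filter (fun z => z.2.2.2 = 0)))))
  have u3 := card_union_le (S.filter (fun z => z.1.2.1 = 0))
      (S.filter (fun z => z.1.2.2 = 0) ∪ (S.filter (fun z => z.2.1 = 0) ∪
      (S.filter (fun z => z.2.2.1 = 0) ∪ S.filter (fun z => z.2.2.2 = 0))))
  have u4 := card_union_le 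
      (S.filter (fun z => z.1.2.2 = 0)) (S.filter (fun z => z.2.1 = 0) ∪
      (S.filter (fun z => z.2.2.1 = 0) ∪ S.filter (fun z => z.2.2.2 = 0)))
  have u5 := card_union_le (S.filter (fun z => z.2.1 = 0))
      (S.filter (fun z => z.2.2.1 = 0) ∪ S.filter (fun z => z.2.2.2 = 0))
  have u6 := card_union_le
      (S.filter (fun z => z.2.2.1 = 0)) (S.filter (fun z => z.2.2.2 = 0))
  have n1 : Nprime p A = S.card := rfl
  have n2 : Nprime p (A.erase 0) = S'.card := rfl
  rw [n1, n2]
  have hk : ∀ (P : (ZMod p × ZMod p × ZMod p) × (ZMod p × ZMod p × ZMod p) → Prop) (i1 i2 : DecidablePred P),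
    (@filter _ P i1 S).card = (@filter _ P i2 S).card := by
      intro P i1 i2; congr!
  rw [hk _ _ (fun _ => Classical.propDecidable _)] at k1 k2 k3 k4 k5 k6
  rw [hk _ _ (fun _ => Classical.propDecidable _)] at u2 u3 u4 u5 u6
  simp only [hk _ _ (fun _ => Classical.propDecidable _)] at *
  omega

lemma add_mono (p : ℕ) (A B : Finset (ZMod p)) (h : A ⊆ B) : addEnergy p A ≤ addEnergy p B := by
  unfold _root_.addEnergy
  exact card_le_card (filter_subset_filter _ (product_subset_product (product_subset_product h h) (product_subset_product h h)))

lemma mul_mono' (p : ℕ) (A B : Finset (ZMod p)) (h : A ⊆ B) : mulEnergy p A ≤ mulEnergy p B := by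
  unfold _root_.mulEnergy
  exact card_le_card (filter_subset_filter _ (product_subset_product (product_subset_product h h) (product_subset_product h h)))

lemma add_lb (p : ℕ) (A : Finset (ZMod p)) : A.card ^ 2 ≤ addEnergy p A := by
  unfold _root_.addEnergy
  rw [sq, ← card_product]
  apply card_le_card_of_injOn (fun z => (z, z))
  · intro z hz
    simp only [coe_filter, mem_product, Set.mem_ofPred_eq, mem_coe] at hz ⊢
    tauto
  · intro z _ z' _ h
    exact congrArg Prod.fst h

lemma mul_lb (p : ℕ) (A : Finset (ZMod p)) : A.card ^ 2 ≤ mulEnergy p A := by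
  unfold _root_.mulEnergy
  rw [sq, ← card_product]
  apply card_le_card_of_injOn (fun z => (z, z))
  · intro z hz
    simp only [coe_filter, mem_product, Set.mem_ofPred_eq, mem_coe] at hz ⊢
    tauto
  · intro z _ z' _ h
    exact congrArg Prod.fst h

lemma main1 (p : ℕ) [Fact p.Prime] (A : Finset (ZMod p)) (hA : 2 ≤ A.card) :
    (Nprime p A : ℝ) - (A.card:ℝ) ^ 6 / p ≤
      4006 * ((A.card:ℝ) ^ 2 * √A.card) * √(addEnergy p A) * √√(mulEnergy p A) *
        Real.logb 2 A.card := by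
  have hcard : A.card ≤ (A.erase 0).card + 1 := by
    have := pred_card_le_card_erase (s := A) (a := (0 : ZMod p))
    omega
  have hle : (A.erase 0).card ≤ A.card := card_le_card (erase_subset _ _)
  have hne : (A.erase 0).Nonempty := card_pos.mp (by omega)
  have h1 := main0 p (A.erase 0) (by simp) hne
  have h2 := zero_rem p A
  have a1 := add_mono p _ _ (erase_subset 0 A)
  have a2 := mul_mono' p _ _ (erase_subset 0 A)
  have b1 := add_lb p A
  have b2 := mul_lb p A
  have hk0 : 0 < (A.erase 0).card := hne.card_pos
  generalize (A.erase 0).card = k at *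
  generalize A.card = m at *
  generalize addEnergy p (A.erase 0) = P' at *
  generalize mulEnergy p (A.erase 0) = Q' at *
  generalize addEnergy p A = P at *
  generalize mulEnergy p A = Q at *
  generalize Nprime p (A.erase 0) = M' at *
  generalize Nprime p A = M at *
  have hp0 : (0:ℝ) < p := by exact_mod_cast (Fact.out : p.Prime).pos
  have hkm : (k:ℝ) ≤ m := by exact_mod_cast hle
  have hk1 : (1:ℝ) ≤ k := by exact_mod_cast hk0
  have hm2 : (2:ℝ) ≤ m := by exact_mod_cast hA
  have hP : (P':ℝ) ≤ P := by exact_mod_cast a1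
  have hQ : (Q':ℝ) ≤ Q := by exact_mod_cast a2
  have hP2 : (m:ℝ) ^ 2 ≤ P := by exact_mod_cast b1
  have hQ2 : (m:ℝ) ^ 2 ≤ Q := by exact_mod_cast b2
  have hM : (M:ℝ) ≤ M' + 6 * (m:ℝ) ^ 4 := by exact_mod_cast h2
  have hl1 : 1 ≤ Real.logb 2 m := by
    rw [Real.le_logb_iff_rpow_le (by norm_num) (by linarith)]; simpa using hm2
  have hlk : Real.logb 2 k ≤ Real.logb 2 m := Real.logb_le_logb_of_le (by norm_num) (by linarith) hkm
  have hlk0 : 0 ≤ Real.logb 2 k := Real.logb_nonneg (by norm_num) hk1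
  have hk6 : (k:ℝ) ^ 6 / p ≤ (m:ℝ) ^ 6 / p := by gcongr
  have hsP : (m:ℝ) ≤ √P := Real.le_sqrt_of_sq_le hP2
  have hsQ : √(m:ℝ) ≤ √√Q := Real.sqrt_le_sqrt (Real.le_sqrt_of_sq_le hQ2)
  have h4 : (m:ℝ) ^ 4 ≤ ((m:ℝ) ^ 2 * √m) * √P * √√Q := by
    calc (m:ℝ) ^ 4 = (m:ℝ) ^ 3 * (√m) ^ 2 := by rw [Real.sq_sqrt (by positivity)]; ring
      _ = ((m:ℝ) ^ 2 * √m) * m * √m := by ring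
      _ ≤ _ := by gcongr
  have h5 : 2000 * ((k:ℝ) ^ 2 * √k) * √P' * √√Q' * (Real.logb 2 k + 1) ≤
      2000 * ((m:ℝ) ^ 2 * √m) * √P * √√Q * (2 * Real.logb 2 m) := by
    gcongr
    linarith
  have h6 : ((m:ℝ) ^ 2 * √m) * √P * √√Q ≤ ((m:ℝ) ^ 2 * √m) * √P * √√Q * Real.logb 2 m :=
    le_mul_of_one_le_right (by positivity) hl1
  nlinarith

end Rud

theorem stmt8 :
    ∃ C : ℝ,
      ∀ (p : ℕ), p.Prime → Odd p →
        ∀ A : Finset (ZMod p), 2 ≤ A.card →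
          (Nprime p A : ℝ) - (A.card : ℝ) ^ 6 / p ≤
            C * (A.card : ℝ) ^ ((5 : ℝ) / 2) * (addEnergy p A : ℝ) ^ ((1 : ℝ) / 2) *
              (mulEnergy p A : ℝ) ^ ((1 : ℝ) / 4) * Real.logb 2 A.card := by
  refine ⟨4006, fun p hp _ A hA => ?_⟩
  haveI : Fact p.Prime := ⟨hp⟩
  have h := Rud.main1 p A hA
  have hm : (0:ℝ) < A.card := by exact_mod_cast (by omega : 0 < A.card)
  have e1 : (A.card : ℝ) ^ ((5 : ℝ) / 2) = (A.card:ℝ) ^ 2 * √A.card := by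
    rw [Real.sqrt_eq_rpow, ← Real.rpow_natCast, ← Real.rpow_add hm]; norm_num
  have e2 : (addEnergy p A : ℝ) ^ ((1 : ℝ) / 2) = √(addEnergy p A) := (Real.sqrt_eq_rpow _).symm
  have e3 : (mulEnergy p A : ℝ) ^ ((1 : ℝ) / 4) = √√(mulEnergy p A) := by
    rw [Real.sqrt_eq_rpow, Real.sqrt_eq_rpow, ← Real.rpow_mul (by positivity)]; norm_num
  rw [e1, e2, e3]
  exact h
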